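/- Let S = k[x_1,…,x_{d+2}] with d ≥ 2 and R = S/(f,g) where f,g is a homogeneous S-regular sequence of degree-2 forms. Let E be a torsion-free R-module of rank e and projective dimension one with μ(E) = d+e, minimal free resolution 0 → R^d →φ R^{d+e} → E → 0 with φ consisting of linear entries, E satisfying G_d and I_1(φ) = (x_1,…,x_{d+2})R. Write S(E) ≅ B/L with B = S ⊗_k T and L = (ℓ_1,…,ℓ_d,f,g), where ψ is the matrix of linear forms over S lifting φ and [ℓ_1 … ℓ_d] = [y_1 … y_{d+e}]·ψ. Then L is generated by a B-regular sequence; in the duality theorem applied to ℓ_1,…,ℓ_d,f,g one has δ = 2 and τ = d; and S(E)_0 is a free T-module of rank one, rank_T S(E)_1 = 2, and rank_T S(E)_2 = 1. -/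

import Mathlib

/-!
STATEMENT 12: `S = k[x_1,…,x_{d+2}]`, `d ≥ 2`, `R = S/(f,g)` with `f,g` a homogeneous
regular sequence of quadrics; `E` a torsion-free `R`-module of rank `e`, `pd_R E = 1`,
`μ(E) = d+e`, linearly presented by `φ`, satisfying `G_d`, `I_1(φ) = (x_1,…,x_{d+2})R`.
With `S(E) ≅ B/L`, `L = (ℓ_1,…,ℓ_d,f,g)`: `L` is generated by a `B`-regular sequence;
in the duality theorem applied to `ℓ_1,…,ℓ_d,f,g` one has `δ = 2`, `τ = d`; and `S(E)_0`
is free of rank one over `T`, `rank_T S(E)_1 = 2`, `rank_T S(E)_2 = 1`.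
-/

open MvPolynomial

noncomputable section

namespace Stmt12

variable (k : Type) [Field k] (d n : ℕ)

/-- `B = R ⊗_k T = k[x_1,…,x_d,y_1,…,y_n]`. -/
abbrev B := MvPolynomial (Fin d ⊕ Fin n) k

/-- `T = k[y_1,…,y_n]`. -/
abbrev T := MvPolynomial (Fin n) k

/-- `B` is a `T`-algebra via `y_j ↦ y_j`. -/
instance : Algebra (T k n) (B k d n) :=
  ((rename Sum.inr : T k n →ₐ[k] B k d n).toRingHom).toAlgebra

/-- The bigrading weight: `bideg x_i = (1,0)`, `bideg y_j = (0,1)`. -/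
def bwt : (Fin d ⊕ Fin n) → ℕ × ℕ := Sum.elim (fun _ => (1, 0)) (fun _ => (0, 1))

/-- The `x`-degree weight. -/
def wx : (Fin d ⊕ Fin n) → ℕ := Sum.elim (fun _ => 1) (fun _ => 0)

/-- The ideal `m = (x_1,…,x_d)B`. -/
def mxB : Ideal (B k d n) := Ideal.span (Set.range fun i : Fin d => (X (Sum.inl i) : B k d n))

variable (I : Ideal (B k d n))

/-- `A = H⁰_m(S)`: elements of `S = B/I` annihilated by a power of `m`. -/
def H0 : Submodule (B k d n) (B k d n ⧸ I) :=
  ⨆ N : ℕ, Submodule.torsionBySet (B k d n) (B k d n ⧸ I)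
    ((mxB k d n ^ N : Ideal (B k d n)) : Set (B k d n))

/-- The bigraded component of `S = B/I` in bidegree `p`. -/
def Scomp (p : ℕ × ℕ) : Submodule k (B k d n ⧸ I) :=
  (weightedHomogeneousSubmodule k (bwt d n) p).map (Ideal.Quotient.mkₐ k I).toLinearMap

/-- The graded strand `S_j = ⊕_b S_{(j,b)}` of `S` in `x`-degree `j`, as a `T`-module. -/
def SxDeg (j : ℕ) : Submodule (T k n) (B k d n ⧸ I) :=
  Submodule.span (T k n) ((Ideal.Quotient.mk I) '' {g : B k d n | g.IsWeightedHomogeneous (wx d n) j})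

/-- The graded strand of `S` in (possibly negative) `x`-degree `i : ℤ`. -/
def SxDegZ (i : ℤ) : Submodule (T k n) (B k d n ⧸ I) :=
  if 0 ≤ i then SxDeg k d n I i.toNat else ⊥

/-- The graded strand `A_i = ⊕_b A_{(i,b)}` of `A = H⁰_m(S)`, as a `T`-module. -/
def AcompZ (i : ℤ) : Submodule (T k n) (B k d n ⧸ I) :=
  (H0 k d n I).restrictScalars (T k n) ⊓ SxDegZ k d n I i

/-- The graded component of `T` in (possibly negative) degree `j`. -/
def TcompZ (j : ℤ) : Submodule k (T k n) :=
  if 0 ≤ j then homogeneousSubmodule (Fin n) k j.toNat else ⊥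

/-- The ideal of `t × t` minors of a matrix. -/
def minorsIdeal {R : Type} [CommRing R] {m' n' : Type} (M : Matrix m' n' R) (t : ℕ) :
    Ideal R :=
  Ideal.span {x | ∃ (f : Fin t → m') (g : Fin t → n'), x = (M.submatrix f g).det}

/-- `ht I ≥ c`: every prime containing `I` has height (= dimension of the localization)
at least `c`. -/
def htGE {R : Type} [CommRing R] (I : Ideal R) (c : ℕ) : Prop :=
  ∀ (p : Ideal R) (_ : p.IsPrime), I ≤ p →
    (c : WithBot ℕ∞) ≤ ringKrullDim (Localization.AtPrime p)

/-!
A polynomial ring is Cohen–Macaulay at the origin, so a sequence of homogeneous elements of positive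
degree is regular as soon as the height of the ideal it generates is at least its length. For
`ℓ_1, …, ℓ_d, f, g` let `Q` be a prime of `R[y_1, …, y_{d+e}]` containing the `ℓ_i`, and `q` its
contraction to `R`. Over the residue field `κ(q)` the `ℓ_i` span a space of linear forms of
dimension `rank φ(q)`, whence `ht Q ≥ ht q + rank φ(q)`. Since `E ⊗ κ(q)` has dimension
`d + e - rank φ(q)`, the condition `G_d` says `rank φ(q) ≥ d + 1 - ht q` when `1 ≤ ht q < d`, while
for `ht q = 0` the prime `q` is associated to `R` and injectivity of `φ` forces `rank φ(q) = d`. So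
`ht Q ≥ d`, and pulling back along `S → R` adds `ht (f, g) = 2`.

For the ranks, regard `B` as `T[x_1, …, x_{d+2}]`. Dividing by a nonzerodivisor of `x`-degree `a`
changes the Hilbert function `H(j)` of `x`-strand ranks into `H(j) - H(j - a)`. After the `d` linear
forms the Hilbert function is that of two variables, `1, 2, 3, …`; each of the two quadrics then
leaves the strand of degree `1` alone and lowers the rank of the strand of degree `2` by one.
-/

open RingTheory.Sequence IsLocalRing Module CategoryTheory Abelian
open scoped Pointwise nonZeroDivisors

universe v

section CohenMacaulay

variable {A : Type*} [CommRing A]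

lemma ringKrullDim_quotient_add_one_le {p q : Ideal A} [p.IsPrime] (hpq : p < q) :
    ringKrullDim (A ⧸ q) + 1 ≤ ringKrullDim (A ⧸ p) := by
  obtain ⟨x, hxq, hxp⟩ := SetLike.exists_of_lt hpq
  refine ringKrullDim_succ_le_of_surjective (Ideal.Quotient.factor hpq.le)
    (Ideal.Quotient.factor_surjective hpq.le) (r := Ideal.Quotient.mk p x) ?_ ?_
  · exact mem_nonZeroDivisors_of_ne_zero (mt Ideal.Quotient.eq_zero_iff_mem.mp hxp)
  · simpa using Ideal.Quotient.eq_zero_iff_mem.mpr hxq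

lemma ringKrullDim_quotient_le_supportDim_quotSMulTop {M : Type*} [AddCommGroup M]
    [Module A M] [Module.Finite A M] {p : Ideal A} (hp : p ∈ associatedPrimes A M) {x : A}
    (hx : x ∈ p) : ringKrullDim (A ⧸ p) ≤ supportDim A (QuotSMulTop x M) := by
  rw [← supportDim_quotient_eq_ringKrullDim]
  have hsub : support A (A ⧸ p) ⊆ support A (QuotSMulTop x M) := by
    have hann : annihilator A M ≤ p := by
      simpa [Submodule.annihilator_top] using IsAssociatedPrime.annihilator_le hp
    rw [support_quotSMulTop, support_eq_zeroLocus, support_eq_zeroLocus,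
      Ideal.annihilator_quotient]
    exact Set.subset_inter (PrimeSpectrum.zeroLocus_anti_mono hann)
      (PrimeSpectrum.zeroLocus_anti_mono (Set.singleton_subset_iff.mpr hx))
  exact Order.krullDim_le_of_strictMono (Set.inclusion hsub) fun _ _ hlt ↦ hlt

lemma maximalIdeal_smul_top_lt_top [IsLocalRing A] (M : Type*) [AddCommGroup M] [Module A M]
    [Module.Finite A M] [Nontrivial M] : maximalIdeal A • (⊤ : Submodule A M) < ⊤ :=
  (Submodule.top_ne_ideal_smul_of_le_jacobson_annihilator
    (maximalIdeal_le_jacobson _)).symm.lt_top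

/-- A module `M` over a Noetherian local ring is *Cohen–Macaulay* if the maximal ideal contains an
`M`-regular sequence whose length is the dimension of `M`. -/
def IsCohenMacaulay (A M : Type*) [CommRing A] [IsLocalRing A] [AddCommGroup M] [Module A M] :
    Prop :=
  ∃ rs : List A, (∀ r ∈ rs, r ∈ maximalIdeal A) ∧ IsRegular M rs ∧ supportDim A M = rs.length

variable [IsNoetherianRing A] [IsLocalRing A]

lemma exists_lt_mem_associatedPrimes_quotSMulTop {M : Type*} [AddCommGroup M] [Module A M]
    [Module.Finite A M] {x : A} (hx : x ∈ maximalIdeal A) (hreg : IsSMulRegular M x)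
    {p : Ideal A} (hp : p ∈ associatedPrimes A M) :
    ∃ q ∈ associatedPrimes A (QuotSMulTop x M), p < q := by
  have hprime := hp.isPrime
  obtain ⟨-, z₀, hz₀⟩ := isAssociatedPrime_iff.mp hp
  have hz₀_ne : z₀ ≠ 0 := by
    rintro rfl
    exact hprime.ne_top (by rw [hz₀]; ext; simp)
  have hxp : x ∉ p := fun hxp ↦
    hz₀_ne (hreg.right_eq_zero_of_smul (by simpa [hz₀] using hxp))
  let N : Submodule A M := Submodule.torsionBySet A M (p : Set A)
  have mem_N {z : M} : z ∈ N ↔ ∀ a ∈ p, a • z = 0 := by simp [N, Submodule.mem_torsionBySet_iff]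
  have hN_ne : N ≠ ⊥ := (Submodule.ne_bot_iff N).mpr
    ⟨z₀, mem_N.mpr fun a ha ↦ by simpa [hz₀] using ha, hz₀_ne⟩
  -- By Nakayama: an element `x w` of `N` has `w ∈ N`, so `N ≤ x M` would give `N = x N`.
  have hN : ¬ N ≤ x • (⊤ : Submodule A M) := fun hle ↦ hN_ne <| by
    refine Submodule.eq_bot_of_le_smul_of_le_jacobson_bot (maximalIdeal A) N
      (IsNoetherian.noetherian N) (fun z hz ↦ ?_) (maximalIdeal_le_jacobson _)
    obtain ⟨w, -, rfl⟩ := hle hz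
    refine Submodule.smul_mem_smul hx (mem_N.mpr fun a ha ↦ hreg.right_eq_zero_of_smul ?_)
    rw [smul_comm]
    exact mem_N.mp hz a ha
  obtain ⟨z, hzN, hz⟩ := Set.not_subset.mp hN
  obtain ⟨q, hq, hle⟩ := exists_le_isAssociatedPrime_of_isNoetherianRing A
    (Submodule.Quotient.mk z : QuotSMulTop x M) (mt (Submodule.Quotient.mk_eq_zero _).mp hz)
  have mem_q {a : A} (ha : a • z ∈ x • (⊤ : Submodule A M)) : a ∈ q :=
    hle (by simpa [← Submodule.Quotient.mk_smul] using ha)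
  refine ⟨q, hq, SetLike.lt_iff_le_and_exists.mpr
    ⟨fun a ha ↦ mem_q ?_, x, mem_q (Submodule.smul_mem_pointwise_smul _ _ _ trivial), hxp⟩⟩
  rw [mem_N.mp hzN a ha]
  exact zero_mem _

lemma length_le_ringKrullDim_quotient_of_mem_associatedPrimes {rs : List A} :
    ∀ {M : Type*} [AddCommGroup M] [Module A M] [Module.Finite A M],
      (∀ r ∈ rs, r ∈ maximalIdeal A) → IsWeaklyRegular M rs →
      ∀ p ∈ associatedPrimes A M, (rs.length : WithBot ℕ∞) ≤ ringKrullDim (A ⧸ p) := by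
  induction rs with
  | nil =>
    intro M _ _ _ _ _ p hp
    have := Ideal.Quotient.nontrivial_iff.mpr hp.isPrime.ne_top
    exact ringKrullDim_nonneg_of_nontrivial
  | cons x rs ih =>
    intro M _ _ _ hmem hreg p hp
    have := hp.isPrime
    rw [isWeaklyRegular_cons_iff] at hreg
    obtain ⟨hx, hrs⟩ := List.forall_mem_cons.mp hmem
    obtain ⟨q, hq, hpq⟩ := exists_lt_mem_associatedPrimes_quotSMulTop hx hreg.1 hp
    calc ((x :: rs).length : WithBot ℕ∞) = rs.length + 1 := by simp
      _ ≤ ringKrullDim (A ⧸ q) + 1 := by gcongr; exact ih hrs hreg.2 q hq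
      _ ≤ ringKrullDim (A ⧸ p) := ringKrullDim_quotient_add_one_le hpq

lemma exists_isRegular_quotSMulTop {M : Type v} [AddCommGroup M] [Module A M] [Module.Finite A M]
    [Nontrivial M] [Small.{v} A] {n : ℕ}
    (h : ∃ rs : List A, rs.length = n + 1 ∧ (∀ r ∈ rs, r ∈ maximalIdeal A) ∧ IsRegular M rs)
    {x : A} (hx : x ∈ maximalIdeal A) (hreg : IsSMulRegular M x) :
    ∃ rs : List A, rs.length = n ∧ (∀ r ∈ rs, r ∈ maximalIdeal A) ∧
      IsRegular (QuotSMulTop x M) rs := by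
  have : Nontrivial (QuotSMulTop x M) := nontrivial_quotSMulTop_of_mem_maximalIdeal M hx
  have ext_vanish := ((ModuleCat.exists_isRegular_tfae (maximalIdeal A) (n + 1) (ModuleCat.of A M)
    (maximalIdeal_smul_top_lt_top M)).out 3 1).mp h
  refine ((ModuleCat.exists_isRegular_tfae (maximalIdeal A) n
    (ModuleCat.of A (QuotSMulTop x M)) (maximalIdeal_smul_top_lt_top _)).out 1 3).mp fun i hi ↦ ?_
  have isZero (j : ℕ) (hj : j < n + 1) :=
    AddCommGrpCat.isZero_of_iff_subsingleton.mpr (ext_vanish j hj)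
  have hreg' : IsSMulRegular (ModuleCat.of A M) x := hreg
  exact AddCommGrpCat.subsingleton_of_isZero <| ShortComplex.Exact.isZero_of_both_zeros
    (Ext.covariant_sequence_exact₃' _ hreg'.smulShortComplex_shortExact i (i + 1) rfl)
    ((isZero i (by omega)).eq_zero_of_src _) ((isZero (i + 1) (by omega)).eq_zero_of_tgt _)

lemma supportDim_le_supportDim_quotient_add_length {xs : List A} :
    ∀ {M : Type v} [AddCommGroup M] [Module A M] [Module.Finite A M],
      (∀ x ∈ xs, x ∈ maximalIdeal A) →
      supportDim A M ≤ supportDim A (M ⧸ Ideal.ofList xs • (⊤ : Submodule A M)) + xs.length := by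
  induction xs with
  | nil =>
    intro M _ _ _ _
    simpa using (supportDim_eq_of_equiv
      (Submodule.quotEquivOfEqBot (Ideal.ofList [] • (⊤ : Submodule A M)) (by simp))).ge
  | cons x xs ih =>
    intro M _ _ _ hmem
    obtain ⟨hx, hxs⟩ := List.forall_mem_cons.mp hmem
    calc supportDim A M ≤ supportDim A (QuotSMulTop x M) + 1 :=
          supportDim_le_supportDim_quotSMulTop_succ hx
      _ ≤ supportDim A (QuotSMulTop x M ⧸ Ideal.ofList xs • (⊤ : Submodule A (QuotSMulTop x M))) +
          xs.length + 1 := by gcongr; exact ih hxs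
      _ = _ := by
        rw [supportDim_eq_of_equiv (Submodule.quotOfListConsSMulTopEquivQuotSMulTopInner M x xs)]
        simp [add_assoc]

namespace IsCohenMacaulay

variable {M : Type v} [AddCommGroup M] [Module A M] [Module.Finite A M]

lemma quotSMulTop [Small.{v} A] (hM : IsCohenMacaulay A M) {x : A} (hx : x ∈ maximalIdeal A)
    (hreg : IsSMulRegular M x) : IsCohenMacaulay A (QuotSMulTop x M) := by
  obtain ⟨rs, hmem, hrs, hdim⟩ := hM
  have : Nontrivial M := hrs.nontrivial
  have : Nontrivial (QuotSMulTop x M) := nontrivial_quotSMulTop_of_mem_maximalIdeal M hx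
  have hdrop := supportDim_quotSMulTop_succ_eq_supportDim hreg hx
  obtain ⟨D, hD⟩ : ∃ D : ℕ∞, supportDim A (QuotSMulTop x M) = D :=
    (WithBot.ne_bot_iff_exists.mp (supportDim_ne_bot_of_nontrivial A _)).imp fun _ h ↦ h.symm
  have hlen : D + 1 = rs.length := by
    rw [hD, hdim] at hdrop
    exact_mod_cast hdrop
  obtain ⟨n, rfl⟩ := ENat.ne_top_iff_exists.mp fun h : D = ⊤ ↦ by simp [h] at hlen
  obtain ⟨ss, rfl, hss⟩ := exists_isRegular_quotSMulTop ⟨rs, by exact_mod_cast hlen.symm, hmem, hrs⟩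
    hx hreg
  exact ⟨ss, hss.1, hss.2, hD⟩

lemma isSMulRegular (hM : IsCohenMacaulay A M) {x : A}
    (hdim : supportDim A (QuotSMulTop x M) + 1 ≤ supportDim A M) : IsSMulRegular M x := by
  obtain ⟨rs, hmem, hrs, hlen⟩ := hM
  by_contra hreg
  have hx_mem : x ∈ ⋃ p ∈ associatedPrimes A M, (p : Set A) := by
    rwa [biUnion_associatedPrimes_eq_compl_regular]
  obtain ⟨p, hp, hxp⟩ := Set.mem_iUnion₂.mp hx_mem
  have hlt : ((rs.length + 1 : ℕ) : WithBot ℕ∞) ≤ rs.length := calc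
    ((rs.length + 1 : ℕ) : WithBot ℕ∞) = rs.length + 1 := by simp
    _ ≤ ringKrullDim (A ⧸ p) + 1 := by
      gcongr
      exact length_le_ringKrullDim_quotient_of_mem_associatedPrimes hmem hrs.1 p hp
    _ ≤ supportDim A (QuotSMulTop x M) + 1 := by
      gcongr
      exact ringKrullDim_quotient_le_supportDim_quotSMulTop hp hxp
    _ ≤ rs.length := hlen ▸ hdim
  exact absurd (Nat.cast_le.mp hlt) (by simp)

lemma isWeaklyRegular {xs : List A} [Small.{v} A] :
    ∀ {M : Type v} [AddCommGroup M] [Module A M] [Module.Finite A M],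
      IsCohenMacaulay A M → (∀ x ∈ xs, x ∈ maximalIdeal A) →
      supportDim A (M ⧸ Ideal.ofList xs • (⊤ : Submodule A M)) + xs.length ≤ supportDim A M →
      IsWeaklyRegular M xs := by
  induction xs with
  | nil => simp
  | cons x xs ih =>
    intro M _ _ _ hM hmem hdim
    obtain ⟨hx, hxs⟩ := List.forall_mem_cons.mp hmem
    have hdim' : supportDim A (QuotSMulTop x M ⧸
        Ideal.ofList xs • (⊤ : Submodule A (QuotSMulTop x M))) + xs.length + 1 ≤
        supportDim A M := by
      rw [← supportDim_eq_of_equiv (Submodule.quotOfListConsSMulTopEquivQuotSMulTopInner M x xs)]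
      simpa [add_assoc] using hdim
    have hreg : IsSMulRegular M x := hM.isSMulRegular <| le_trans
      (by gcongr; exact supportDim_le_supportDim_quotient_add_length hxs) hdim'
    rw [← supportDim_quotSMulTop_succ_eq_supportDim hreg hx] at hdim'
    exact (isWeaklyRegular_cons_iff M x xs).mpr ⟨hreg, ih (hM.quotSMulTop hx hreg) hxs
      (ENat.WithBot.add_le_add_one_right_iff.mp hdim')⟩

end IsCohenMacaulay

end CohenMacaulay

section Height

lemma add_height_le_height_of_strictMono {α β : Type*} [Preorder α] [Preorder β] {f : α → β}
    (hf : StrictMono f) {c : ℕ∞} (hc : ∀ a, c ≤ Order.height (f a)) (a : α) :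
    c + Order.height a ≤ Order.height (f a) := by
  have key (n : ℕ) : ∀ a, n ≤ Order.height a → c + n ≤ Order.height (f a) := by
    induction n with
    | zero => simpa using hc
    | succ n ih =>
      intro a ha
      have hn : (n : ℕ∞) < Order.height a := (Order.add_one_le_iff_of_not_isMax (by simp)).mp ha
      rw [Order.height_eq_iSup_lt_height] at hn
      obtain ⟨b, hba, hb⟩ : ∃ b < a, n < Order.height b + 1 := by simpa [lt_iSup_iff] using hn
      calc c + (n + 1 : ℕ) = (c + n) + 1 := by push_cast; ring
        _ ≤ Order.height (f b) + 1 := by gcongr; exact ih b (ENat.natCast_lt_add_one_iff.mp hb)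
        _ ≤ Order.height (f a) := Order.height_add_one_le (hf hba)
  cases ha : Order.height a with
  | top => exact ENat.forall_natCast_le_iff_le.mp fun n _ ↦
      le_add_self.trans (key n a (by simp [ha]))
  | coe n => exact key n a ha.ge

variable {A A' : Type*} [CommRing A] [CommRing A']

lemma height_ker_add_height_le_height_comap {ρ : A →+* A'} (hρ : Function.Surjective ρ)
    (q : Ideal A') [q.IsPrime] : (RingHom.ker ρ).height + q.height ≤ (q.comap ρ).height := by
  have hker (x : PrimeSpectrum A') :
      (RingHom.ker ρ).height ≤ Order.height (PrimeSpectrum.comap ρ x) := by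
    rw [← PrimeSpectrum.height_eq_orderHeight]
    exact Ideal.height_mono (Ideal.comap_mono bot_le)
  have := add_height_le_height_of_strictMono (RingHom.strictMono_comap_of_surjective hρ) hker
    ⟨q, ‹_›⟩
  simpa [← PrimeSpectrum.height_eq_orderHeight] using this

lemma height_add_ringKrullDim_quotient_le (I : Ideal A) :
    I.height + ringKrullDim (A ⧸ I) ≤ ringKrullDim A := by
  rcases subsingleton_or_nontrivial (A ⧸ I) with _ | _
  · simp [ringKrullDim_eq_bot_of_subsingleton]
  rw [ringKrullDim, Order.krullDim_eq_iSup_height_of_nonempty, ← WithBot.coe_add, ENat.add_iSup,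
    WithBot.coe_iSup (OrderTop.bddAbove _)]
  refine iSup_le fun q ↦ ?_
  have := height_ker_add_height_le_height_comap (Ideal.Quotient.mk_surjective (I := I)) q.asIdeal
  rw [Ideal.mk_ker, PrimeSpectrum.height_eq_orderHeight] at this
  exact (WithBot.coe_le_coe.mpr this).trans Ideal.height_le_ringKrullDim_of_isPrime

lemma length_le_height_of_isWeaklyRegular [IsNoetherianRing A] {xs : List A}
    (hxs : IsWeaklyRegular A xs) : (xs.length : ℕ∞) ≤ (Ideal.ofList xs).height := by
  rw [Ideal.height_eq_inf_minimalPrimes]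
  refine le_iInf₂ fun p hp ↦ ?_
  have := hp.isPrime
  have hmem : ∀ x ∈ xs, x ∈ p := fun x hx ↦ hp.1.2 (Ideal.subset_span hx)
  have hreg := hxs.isRegular_of_isLocalization_of_mem (Localization.AtPrime p) p hmem
  have hdim := ringKrullDim_add_length_eq_ringKrullDim_of_isRegular _ hreg
  have : Nontrivial (Localization.AtPrime p ⧸ Ideal.ofList (xs.map (algebraMap A _))) :=
    Ideal.Quotient.nontrivial_iff.mpr fun h ↦ hreg.top_ne_smul (by simp [h])
  rw [IsLocalization.AtPrime.ringKrullDim_eq_height p (Localization.AtPrime p),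
    List.length_map] at hdim
  have hle : ((xs.length : ℕ∞) : WithBot ℕ∞) ≤ p.height :=
    hdim ▸ le_add_of_nonneg_left ringKrullDim_nonneg_of_nontrivial
  exact WithBot.coe_le_coe.mp hle

end Height

section RegularSequence

lemma isSMulRegular_quotient_ofList_iff {A : Type*} [CommRing A] {xs : List A} {x : A} :
    IsSMulRegular (A ⧸ Ideal.ofList xs • (⊤ : Ideal A)) x ↔
      ∀ a, x * a ∈ Ideal.ofList xs → a ∈ Ideal.ofList xs := by
  have mk_eq_zero (a : A) :
      (Submodule.Quotient.mk a : A ⧸ Ideal.ofList xs • (⊤ : Ideal A)) = 0 ↔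
        a ∈ Ideal.ofList xs := by
    rw [Submodule.Quotient.mk_eq_zero, smul_eq_mul, Ideal.mul_top]
  rw [isSMulRegular_iff_right_eq_zero_of_smul, (Submodule.Quotient.mk_surjective _).forall]
  exact forall_congr' fun a ↦ imp_congr (mk_eq_zero (x * a)) (mk_eq_zero a)

lemma isWeaklyRegular_iff_forall_mem {A : Type*} [CommRing A] {xs : List A} :
    IsWeaklyRegular A xs ↔ ∀ i (h : i < xs.length) (a : A),
      xs[i] * a ∈ Ideal.ofList (xs.take i) → a ∈ Ideal.ofList (xs.take i) := by
  rw [isWeaklyRegular_iff]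
  exact forall₂_congr fun _ _ ↦ isSMulRegular_quotient_ofList_iff

lemma isWeaklyRegular_append_singleton_iff {A : Type*} [CommRing A] {xs : List A} {x : A} :
    IsWeaklyRegular A (xs ++ [x]) ↔
      IsWeaklyRegular A xs ∧ ∀ a, x * a ∈ Ideal.ofList xs → a ∈ Ideal.ofList xs := by
  rw [isWeaklyRegular_append_iff, isWeaklyRegular_singleton_iff, isSMulRegular_quotient_ofList_iff]

lemma isWeaklyRegular_map_ringEquiv {A A' : Type*} [CommRing A] [CommRing A'] (e : A ≃+* A')
    {xs : List A} (hxs : IsWeaklyRegular A xs) : IsWeaklyRegular A' (xs.map e) :=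
  (AddEquiv.isWeaklyRegular_congr (e := e.toAddEquiv) (List.forall₂_map_right_iff.mpr
    (List.forall₂_same.mpr fun x _ a ↦ map_mul e x a))).mp hxs

lemma ne_zero_of_mem_isRegular {A : Type*} [CommRing A] {xs : List A} {x : A} (hxs : IsRegular A xs)
    (hx : x ∈ xs) : x ≠ 0 := by
  rintro rfl
  obtain ⟨as, bs, rfl⟩ := List.append_of_mem hx
  rw [List.append_cons] at hxs
  have hreg := ((isWeaklyRegular_append_iff A (as ++ [0]) bs).mp hxs.toIsWeaklyRegular).1
  have hone := (isWeaklyRegular_append_singleton_iff.mp hreg).2 1 (by simp)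
  refine hxs.top_ne_smul ?_
  rw [eq_comm, smul_eq_mul, Ideal.mul_top, Ideal.eq_top_iff_one, Ideal.ofList_append,
    Ideal.ofList_append]
  exact Ideal.mem_sup_left (Ideal.mem_sup_left hone)

lemma ofList_ofFn_append_pair {A : Type*} [CommSemiring A] {n : ℕ} (a : Fin n → A) (x y : A) :
    Ideal.ofList (List.ofFn a ++ [x, y]) = Ideal.span (Set.range a ∪ {x, y}) :=
  congrArg Ideal.span (Set.ext fun _ ↦ List.mem_append.trans (or_congr List.mem_ofFn List.mem_pair))

end RegularSequence

section HomogeneousSequence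

lemma IsCohenMacaulay.isWeaklyRegular_of_length_le_height {A : Type*} [CommRing A]
    [IsNoetherianRing A] [IsLocalRing A] (hA : IsCohenMacaulay A A) {xs : List A}
    (hmem : ∀ x ∈ xs, x ∈ maximalIdeal A) (hht : xs.length ≤ (Ideal.ofList xs).height) :
    IsWeaklyRegular A xs := by
  refine hA.isWeaklyRegular hmem ?_
  calc supportDim A (A ⧸ Ideal.ofList xs • (⊤ : Ideal A)) + xs.length
      = xs.length + ringKrullDim (A ⧸ Ideal.ofList xs) := by
        rw [add_comm, supportDim_quotient_eq_ringKrullDim, smul_eq_mul, Ideal.mul_top]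
    _ ≤ (Ideal.ofList xs).height + ringKrullDim (A ⧸ Ideal.ofList xs) := by
        gcongr
        exact WithBot.coe_le_coe.mpr hht
    _ ≤ ringKrullDim A := height_add_ringKrullDim_quotient_le _
    _ = supportDim A A := (supportDim_self_eq_ringKrullDim A).symm

lemma isWeaklyRegular_map_X {R σ : Type*} [CommRing R] {l : List σ} (hl : l.Nodup) :
    IsWeaklyRegular (MvPolynomial σ R) (l.map (X : σ → MvPolynomial σ R)) := by
  refine isWeaklyRegular_iff_forall_mem.mpr fun i hi a ha ↦ ?_
  have hspan : Ideal.ofList ((l.map (X : σ → MvPolynomial σ R)).take i) =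
      Ideal.span (X '' {x | x ∈ l.take i}) := by
    rw [← List.map_take, Ideal.ofList]
    congr 1
    ext
    exact List.mem_map
  have hil : i < l.length := by simpa using hi
  rw [hspan, mem_ideal_span_X_image] at ha ⊢
  rw [List.getElem_map] at ha
  intro m hm
  obtain ⟨j, hj, hne⟩ := ha (Finsupp.single l[i] 1 + m)
    (by simpa [MvPolynomial.mem_support_iff, coeff_X_mul] using hm)
  have hji : l[i] ≠ j := by
    rintro rfl
    obtain ⟨n, hn, hn'⟩ := List.mem_take_iff_getElem.mp hj
    have := hl.getElem_inj_iff.mp hn'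
    omega
  exact ⟨j, hj, by simpa [Finsupp.single_apply, hji] using hne⟩

lemma forall_mem_map_algebraMap_mem_maximalIdeal {A : Type*} [CommRing A] {p : Ideal A} [p.IsPrime]
    {xs : List A} (hxs : ∀ x ∈ xs, x ∈ p) :
    ∀ y ∈ xs.map (algebraMap A (Localization.AtPrime p)), y ∈ maximalIdeal _ :=
  List.forall_mem_map.mpr fun x hx ↦
    (IsLocalization.AtPrime.to_map_mem_maximal_iff _ p x).mpr (hxs x hx)

variable {σ K : Type*} [Field K]

variable (σ K) in
/-- The augmentation ideal of a polynomial ring: the maximal ideal of the origin, generated by the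
variables. -/
abbrev augmentationIdeal : Ideal (MvPolynomial σ K) := RingHom.ker constantCoeff

instance : (augmentationIdeal σ K).IsPrime := RingHom.ker_isPrime _

lemma isCohenMacaulay_localization_augmentationIdeal [Finite σ] :
    IsCohenMacaulay (Localization.AtPrime (augmentationIdeal σ K))
      (Localization.AtPrime (augmentationIdeal σ K)) := by
  have := Fintype.ofFinite σ
  set n := augmentationIdeal σ K
  let xs : List (MvPolynomial σ K) := (Finset.univ : Finset σ).toList.map X
  have hxs : IsWeaklyRegular _ xs := isWeaklyRegular_map_X (Finset.nodup_toList _)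
  have hmem : ∀ x ∈ xs, x ∈ n := by simp [xs, n, RingHom.mem_ker]
  have hlen : xs.length = Nat.card σ := by simp [xs]
  refine ⟨xs.map (algebraMap _ _), ?_, hxs.isRegular_of_isLocalization_of_mem _ n hmem, ?_⟩
  · exact forall_mem_map_algebraMap_mem_maximalIdeal hmem
  · rw [supportDim_self_eq_ringKrullDim, IsLocalization.AtPrime.ringKrullDim_eq_height n,
      List.length_map]
    refine le_antisymm ?_ ?_
    · refine Ideal.height_le_ringKrullDim_of_isPrime.trans ?_
      simp [MvPolynomial.ringKrullDim_of_isNoetherianRing, hlen]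
    · exact WithBot.coe_le_coe.mpr <| (length_le_height_of_isWeaklyRegular hxs).trans
        (Ideal.height_mono (Ideal.span_le.mpr hmem))

attribute [local instance] MvPolynomial.gradedAlgebra

lemma coe_decompose_homogeneousSubmodule {R : Type*} [CommRing R] (p : MvPolynomial σ R) (i : ℕ) :
    (DirectSum.decompose (homogeneousSubmodule σ R) p i : MvPolynomial σ R) =
      homogeneousComponent i p :=
  decomposition.decompose'_apply p i

lemma homogeneousComponent_isHomogeneous_mul {R : Type*} [CommRing R] {x : MvPolynomial σ R}
    {n : ℕ} (hx : x.IsHomogeneous n) (a : MvPolynomial σ R) (j : ℕ) :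
    homogeneousComponent (n + j) (x * a) = x * homogeneousComponent j a := by
  have := DirectSum.coe_decompose_mul_add_of_left_mem (homogeneousSubmodule σ R)
    (j := j) (b := a) hx
  rwa [coe_decompose_homogeneousSubmodule, coe_decompose_homogeneousSubmodule] at this

lemma homogeneousComponent_mul_isHomogeneous {R : Type*} [CommRing R] {b : MvPolynomial σ R}
    {j : ℕ} (hb : b.IsHomogeneous j) (s : MvPolynomial σ R) :
    homogeneousComponent j (s * b) = C (constantCoeff s) * b := by
  have := DirectSum.coe_decompose_mul_add_of_right_mem (homogeneousSubmodule σ R)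
    (i := 0) (a := s) hb
  rwa [zero_add, coe_decompose_homogeneousSubmodule, coe_decompose_homogeneousSubmodule,
    homogeneousComponent_zero] at this

lemma mem_of_algebraMap_mem_map_localization {I : Ideal (MvPolynomial σ K)}
    (hI : I.IsHomogeneous (homogeneousSubmodule σ K)) {b : MvPolynomial σ K} {j : ℕ}
    (hb : b.IsHomogeneous j)
    (h : algebraMap _ (Localization.AtPrime (augmentationIdeal σ K)) b ∈ I.map (algebraMap _ _)) :
    b ∈ I := by
  obtain ⟨s, hs, hsb⟩ := (IsLocalization.algebraMap_mem_map_algebraMap_iff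
    (augmentationIdeal σ K).primeCompl _ I b).mp h
  have hs₀ : constantCoeff s ≠ 0 := hs
  have hj : C (constantCoeff s) * b ∈ I := by
    rw [← homogeneousComponent_mul_isHomogeneous hb]
    exact (mem_iff_homogeneousComponent_mem hI _).mp hsb j
  simpa [← mul_assoc, ← C_mul, hs₀] using I.mul_mem_left (C (constantCoeff s)⁻¹) hj

theorem isRegular_of_isHomogeneous_of_length_le_height [Finite σ] {xs : List (MvPolynomial σ K)}
    (hxs : ∀ x ∈ xs, ∃ n, 0 < n ∧ x.IsHomogeneous n)
    (hht : xs.length ≤ (Ideal.ofList xs).height) : IsRegular (MvPolynomial σ K) xs := by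
  set n := augmentationIdeal σ K
  have hmem : ∀ x ∈ xs, x ∈ n := by
    intro x hx
    obtain ⟨m, hm, hxm⟩ := hxs x hx
    exact hxm.coeff_eq_zero (by simpa using hm.ne)
  have hloc : IsWeaklyRegular (Localization.AtPrime n)
      (xs.map (algebraMap _ (Localization.AtPrime n))) := by
    refine isCohenMacaulay_localization_augmentationIdeal.isWeaklyRegular_of_length_le_height ?_ ?_
    · exact forall_mem_map_algebraMap_mem_maximalIdeal hmem
    · rw [List.length_map, ← Ideal.map_ofList, ← IsLocalization.height_under n.primeCompl]
      exact hht.trans (Ideal.height_mono Ideal.le_comap_map)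
  have hprime : n.IsPrime := inferInstance
  refine ⟨isWeaklyRegular_iff_forall_mem.mpr fun i hi a ha ↦ ?_, fun h ↦ hprime.ne_top ?_⟩
  · have hI : (Ideal.ofList (xs.take i)).IsHomogeneous (homogeneousSubmodule σ K) :=
      Ideal.homogeneous_span _ _ fun x hx ↦
        (hxs x (List.mem_of_mem_take hx)).imp fun _ ↦ And.right
    obtain ⟨m, -, hm⟩ := hxs xs[i] (List.getElem_mem hi)
    rw [mem_iff_homogeneousComponent_mem hI] at ha ⊢
    refine fun j ↦ mem_of_algebraMap_mem_map_localization hI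
      (homogeneousComponent_isHomogeneous j a) ?_
    have := isWeaklyRegular_iff_forall_mem.mp hloc i (by simpa using hi)
      (algebraMap _ _ (homogeneousComponent j a))
    rw [← List.map_take, ← Ideal.map_ofList, List.getElem_map, ← map_mul] at this
    refine this (Ideal.mem_map_of_mem _ ?_)
    rw [← homogeneousComponent_isHomogeneous_mul hm]
    exact ha _
  · rw [Ideal.smul_eq_mul, Ideal.mul_top] at h
    rw [eq_top_iff, h]
    exact Ideal.span_le.mpr hmem

end HomogeneousSequence

section ReductionOfCoefficients

lemma height_le_height_map_of_hasGoingDown {A A' : Type*} [CommRing A] [CommRing A']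
    [Algebra A A'] [IsNoetherianRing A] [IsNoetherianRing A'] [Algebra.HasGoingDown A A']
    (p : Ideal A) : p.height ≤ (p.map (algebraMap A A')).height := by
  rw [(p.map _).height_eq_inf_minimalPrimes]
  refine le_iInf₂ fun q hq ↦ ?_
  have := hq.isPrime
  have : q.LiesOver (q.comap (algebraMap A A')) := ⟨rfl⟩
  rw [Ideal.height_eq_height_add_of_liesOver_of_hasGoingDown (q.comap (algebraMap A A')) q]
  exact (Ideal.height_mono (Ideal.map_le_iff_le_comap.mp hq.1.2)).trans le_self_add

variable {σ A : Type*} [CommRing A] {p : Ideal A} {P : Ideal (MvPolynomial σ A)}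

lemma map_mk_surjective (p : Ideal A) :
    Function.Surjective (MvPolynomial.map (σ := σ) (Ideal.Quotient.mk p)) :=
  MvPolynomial.map_surjective _ Ideal.Quotient.mk_surjective

lemma ker_map_mk (p : Ideal A) :
    RingHom.ker (MvPolynomial.map (σ := σ) (Ideal.Quotient.mk p)) = p.map C := by
  rw [MvPolynomial.ker_map, Ideal.mk_ker]

lemma isPrime_map_map_mk [P.IsPrime] (hP : p.map C ≤ P) :
    (P.map (MvPolynomial.map (Ideal.Quotient.mk p))).IsPrime :=
  Ideal.map_isPrime_of_surjective (map_mk_surjective p) ((ker_map_mk p).trans_le hP)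

lemma comap_map_map_mk (hP : p.map C ≤ P) :
    (P.map (MvPolynomial.map (Ideal.Quotient.mk p))).comap
      (MvPolynomial.map (Ideal.Quotient.mk p)) = P := by
  rw [Ideal.comap_map_of_surjective' _ (map_mk_surjective p), ker_map_mk, sup_eq_left.mpr hP]

lemma height_add_height_map_map_mk_le_height [Finite σ] [IsNoetherianRing A] [P.IsPrime]
    (hP : p.map C ≤ P) :
    p.height + (P.map (MvPolynomial.map (Ideal.Quotient.mk p))).height ≤ P.height := by
  have := isPrime_map_map_mk hP
  have hle := height_ker_add_height_le_height_comap (map_mk_surjective p)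
    (P.map (MvPolynomial.map (Ideal.Quotient.mk p)))
  rw [comap_map_map_mk hP, ker_map_mk] at hle
  refine le_trans ?_ hle
  gcongr
  exact height_le_height_map_of_hasGoingDown (A' := MvPolynomial σ A) p

end ReductionOfCoefficients

section LinearForms

variable {ι σ K : Type*} [Fintype σ] [Field K]

/-- The linear change of coordinates of a polynomial ring given by a basis `b` of the space of its
linear forms, which sends the `i`-th variable to the linear form with coefficients `b i`. -/
def changeOfCoordinates {κ : Type*} (b : Basis κ K (σ → K)) :
    MvPolynomial κ K ≃ₐ[K] MvPolynomial σ K :=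
  (SymmetricAlgebra.equivMvPolynomial b).symm.trans
    (SymmetricAlgebra.equivMvPolynomial (Pi.basisFun K σ))

lemma changeOfCoordinates_X {κ : Type*} (b : Basis κ K (σ → K)) (i : κ) :
    changeOfCoordinates b (X i) = Fintype.linearCombination K X (b i) := by
  rw [changeOfCoordinates, AlgEquiv.trans_apply, SymmetricAlgebra.equivMvPolynomial_symm_X]
  conv_lhs => rw [← (Pi.basisFun K σ).sum_repr (b i)]
  simp only [map_sum, map_smul, SymmetricAlgebra.equivMvPolynomial_ι_apply, Pi.basisFun_repr,
    Fintype.linearCombination_apply]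

lemma finrank_le_height_of_linearCombination_mem {W : Submodule K (σ → K)}
    {P : Ideal (MvPolynomial σ K)} (hW : ∀ v ∈ W, Fintype.linearCombination K X v ∈ P) :
    finrank K W ≤ P.height := by
  obtain ⟨V, hV⟩ := W.exists_isCompl
  let b := ((finBasis K W).prod (finBasis K V)).map (W.prodEquivOfIsCompl V hV)
  have hX (i) : changeOfCoordinates b (X (Sum.inl i)) ∈ P := by
    have hb : b (Sum.inl i) = finBasis K W i := by simp [b]
    rw [changeOfCoordinates_X, hb]
    exact hW _ (finBasis K W i).2
  let l : List (Fin (finrank K W) ⊕ Fin (finrank K V)) := List.ofFn Sum.inl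
  have hl : l.Nodup := List.nodup_ofFn.mpr Sum.inl_injective
  calc (finrank K W : ℕ∞) = (l.map (X (R := K))).length := by simp [l]
    _ ≤ (Ideal.ofList (l.map (X (R := K)))).height :=
      length_le_height_of_isWeaklyRegular (isWeaklyRegular_map_X hl)
    _ ≤ (P.comap (changeOfCoordinates b : _ ≃+* _)).height :=
      Ideal.height_mono (Ideal.span_le.mpr (List.forall_mem_map.mpr fun i hi ↦ by
        obtain ⟨i, rfl⟩ := List.mem_ofFn.mp hi
        exact hX i))
    _ = P.height := RingEquiv.height_comap _ _

lemma rank_le_height_of_toMvPolynomial_mem [Finite ι] {M : Matrix ι σ K}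
    {P : Ideal (MvPolynomial σ K)} (hM : ∀ i, M.toMvPolynomial i ∈ P) : M.rank ≤ P.height := by
  rw [Matrix.rank_eq_finrank_span_row]
  refine finrank_le_height_of_linearCombination_mem fun v hv ↦ ?_
  have hle : Submodule.span K (Set.range M.row) ≤
      (P.restrictScalars K).comap (Fintype.linearCombination K X) := by
    refine Submodule.span_le.mpr (Set.range_subset_iff.mpr fun i ↦ ?_)
    simpa [Matrix.toMvPolynomial, ← C_mul_X_eq_monomial, Fintype.linearCombination_apply,
      smul_eq_C_mul] using hM i
  exact hle hv

attribute [local instance] algebraMvPolynomial in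
lemma rank_map_le_height_of_comap_C_eq_bot {A : Type*} [CommRing A] [IsDomain A] [Algebra A K]
    [IsFractionRing A K] [Finite ι] {M : Matrix ι σ A} {P : Ideal (MvPolynomial σ A)} [P.IsPrime]
    (hP : P.comap C = ⊥) (hM : ∀ i, M.toMvPolynomial i ∈ P) :
    (M.map (algebraMap A K)).rank ≤ P.height := by
  have hdis : Disjoint (A⁰.map (C : A →+* MvPolynomial σ A) : Set (MvPolynomial σ A)) P := by
    rw [Set.disjoint_left]
    rintro _ ⟨a, ha, rfl⟩ haP
    exact nonZeroDivisors.ne_zero ha (hP.le haP)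
  rw [← IsLocalization.height_map_of_disjoint (S := MvPolynomial σ K) _ P hdis]
  refine rank_le_height_of_toMvPolynomial_mem fun i ↦ ?_
  rw [Matrix.toMvPolynomial_map]
  exact Ideal.mem_map_of_mem _ (hM i)

lemma height_comap_C_add_rank_le_height {A : Type*} [CommRing A] [IsNoetherianRing A] [Finite ι]
    {M : Matrix ι σ A} (P : Ideal (MvPolynomial σ A)) [P.IsPrime]
    (hM : ∀ i, M.toMvPolynomial i ∈ P) :
    (P.comap C).height + (M.map (algebraMap A (P.comap C).ResidueField)).rank ≤ P.height := by
  set p := P.comap C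
  have hpP : p.map C ≤ P := Ideal.map_comap_le
  have := isPrime_map_map_mk hpP
  refine le_trans ?_ (height_add_height_map_map_mk_le_height hpP)
  have hbot : (P.map (MvPolynomial.map (Ideal.Quotient.mk p))).comap C = ⊥ := by
    refine eq_bot_iff.mpr fun a ha ↦ ?_
    obtain ⟨a, rfl⟩ := Ideal.Quotient.mk_surjective a
    refine Ideal.Quotient.eq_zero_iff_mem.mpr ((comap_map_map_mk hpP).le ?_ : C a ∈ P)
    simpa using ha
  gcongr
  calc ((M.map (algebraMap A p.ResidueField)).rank : ℕ∞)
      = ((M.map (Ideal.Quotient.mk p)).map (algebraMap (A ⧸ p) p.ResidueField)).rank := by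
        rw [Matrix.map_map]
        rfl
    _ ≤ (P.map (MvPolynomial.map (Ideal.Quotient.mk p))).height := by
        refine rank_map_le_height_of_comap_C_eq_bot hbot fun i ↦ ?_
        rw [Matrix.toMvPolynomial_map]
        exact Ideal.mem_map_of_mem _ (hM i)

end LinearForms

section Bigrading

variable {σ τ R M : Type*} [CommSemiring R] [AddCommMonoid M]

lemma isWeightedHomogeneous_const {p : MvPolynomial σ R} {j : ℕ} (hp : p.IsHomogeneous j) (c : M) :
    p.IsWeightedHomogeneous (fun _ ↦ c) (j • c) := by
  intro u hu
  rw [← hp hu, Finsupp.weight_apply, Finsupp.weight_apply, Finsupp.sum, Finsupp.sum,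
    Finset.sum_smul]
  simp

lemma isWeightedHomogeneous_rename {w : τ → M} {h : σ → τ} {p : MvPolynomial σ R} {a : M}
    (hp : p.IsWeightedHomogeneous (w ∘ h) a) : (rename h p).IsWeightedHomogeneous w a := by
  intro u hu
  obtain ⟨v, rfl, hv⟩ := coeff_rename_ne_zero _ _ _ hu
  rw [← hp hv, Finsupp.weight, Finsupp.weight]
  exact Finsupp.linearCombination_mapDomain ℕ h v

lemma weight_sumElim (w : σ ⊕ τ → M) (a : σ →₀ ℕ) (b : τ →₀ ℕ) :
    Finsupp.weight w (Finsupp.sumElim a b) =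
      Finsupp.weight (w ∘ Sum.inl) a + Finsupp.weight (w ∘ Sum.inr) b := by
  simp [Finsupp.weight_apply, Finsupp.sum, Finset.sum_disjSum]

lemma sumAlgEquiv_monomial_sumElim (a : σ →₀ ℕ) (b : τ →₀ ℕ) (r : R) :
    sumAlgEquiv R σ τ (monomial (Finsupp.sumElim a b) r) = monomial a (monomial b r) := by
  simp [sumAlgEquiv, monomial]

lemma coeff_coeff_sumAlgEquiv (F : MvPolynomial (σ ⊕ τ) R) (a : σ →₀ ℕ) (b : τ →₀ ℕ) :
    coeff b (coeff a (sumAlgEquiv R σ τ F)) = coeff (Finsupp.sumElim a b) F := by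
  classical
  induction F using MvPolynomial.induction_on' with
  | monomial u r =>
    obtain ⟨⟨u, v⟩, rfl⟩ := Finsupp.sumFinsuppEquivProdFinsupp.symm.surjective u
    have hinj : Finsupp.sumElim u v = Finsupp.sumElim a b ↔ u = a ∧ v = b :=
      (Finsupp.sumFinsuppEquivProdFinsupp.symm.injective.eq_iff' (a := (u, v)) (b := (a, b))
        rfl).trans Prod.mk_inj
    rw [Finsupp.sumFinsuppEquivProdFinsupp_symm_apply, sumAlgEquiv_monomial_sumElim]
    simp only [coeff_monomial, hinj]
    split_ifs <;> simp_all
  | add p q hp hq => simp only [map_add, coeff_add, hp, hq]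

lemma isHomogeneous_sumAlgEquiv_iff {F : MvPolynomial (σ ⊕ τ) R} {j : ℕ} :
    (sumAlgEquiv R σ τ F).IsHomogeneous j ↔
      F.IsWeightedHomogeneous (Sum.elim (fun _ ↦ 1) (fun _ ↦ 0) : σ ⊕ τ → ℕ) j := by
  have weight_eq (a : σ →₀ ℕ) (b : τ →₀ ℕ) :
      Finsupp.weight (Sum.elim (fun _ ↦ 1) (fun _ ↦ 0) : σ ⊕ τ → ℕ) (Finsupp.sumElim a b) =
        Finsupp.weight 1 a := by
    rw [weight_sumElim]
    simp [Finsupp.weight_apply]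
  constructor
  · intro h u hu
    obtain ⟨⟨a, b⟩, rfl⟩ := Finsupp.sumFinsuppEquivProdFinsupp.symm.surjective u
    rw [Finsupp.sumFinsuppEquivProdFinsupp_symm_apply, ← coeff_coeff_sumAlgEquiv] at hu
    exact (weight_eq a b).trans (h fun ha ↦ hu (by simp [ha]))
  · intro h a ha
    obtain ⟨b, hb⟩ := exists_coeff_ne_zero ha
    rw [coeff_coeff_sumAlgEquiv] at hb
    exact (weight_eq a b).symm.trans (h hb)

end Bigrading

section Presentation

variable {R E m n : Type*} [CommRing R] [AddCommGroup E] [Module R E]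

lemma finrank_le_card_of_span_localizedModule_eq_top {p : Ideal R} [p.IsPrime]
    {s : Finset (LocalizedModule p.primeCompl E)}
    (hs : Submodule.span (Localization.AtPrime p) (s : Set (LocalizedModule p.primeCompl E)) = ⊤)
    {V : Type*} [AddCommGroup V] [Module p.ResidueField V] [Module (Localization.AtPrime p) V]
    [IsScalarTower (Localization.AtPrime p) p.ResidueField V] [Module R V]
    [IsScalarTower R (Localization.AtPrime p) V] {f : E →ₗ[R] V}
    (hf : Submodule.span p.ResidueField (Set.range f) = ⊤) :
    finrank p.ResidueField V ≤ s.card := by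
  classical
  have := isLocalizedModule_id p.primeCompl V (Localization.AtPrime p)
  let F : LocalizedModule p.primeCompl E →ₗ[Localization.AtPrime p] V :=
    (LocalizedModule.lift p.primeCompl f
      (IsLocalizedModule.map_units (LinearMap.id (R := R) (M := V)))).extendScalarsOfIsLocalization
        p.primeCompl (Localization.AtPrime p)
  have hF (x : E) : F (LocalizedModule.mkLinearMap p.primeCompl E x) = f x :=
    LinearMap.congr_fun (LocalizedModule.lift_comp ..) x
  have hspan : Submodule.span p.ResidueField (s.image F : Set V) = ⊤ := by
    refine top_le_iff.mp (hf.symm.trans_le (Submodule.span_le.mpr ?_))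
    rintro _ ⟨x, rfl⟩
    refine Submodule.span_le_restrictScalars (Localization.AtPrime p) _ _ ?_
    rw [Finset.coe_image, ← Submodule.map_span, hs, ← hF]
    exact Submodule.mem_map_of_mem trivial
  calc finrank p.ResidueField V = (s.image F : Set V).finrank p.ResidueField := by
        rw [Set.finrank, hspan, finrank_top]
    _ ≤ s.card := (finrank_span_finset_le_card _).trans Finset.card_image_le

variable [Fintype n] {φ : Matrix m n R}

lemma rank_map_residueField_eq_card [IsNoetherianRing R] {p : Ideal R} [p.IsPrime]
    (hp : p ∈ associatedPrimes R R) (hφ : Function.Injective φ.mulVecLin) :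
    (φ.map (algebraMap R p.ResidueField)).rank = Fintype.card n := by
  obtain ⟨-, z, hz⟩ := isAssociatedPrime_iff.mp hp
  have hz (a : R) : a ∈ p ↔ z * a = 0 := by
    rw [hz, Submodule.mem_colon_singleton, Submodule.mem_bot, smul_eq_mul, mul_comm]
  have hker (a : R) : algebraMap R p.ResidueField a = 0 ↔ a ∈ p :=
    Ideal.algebraMap_residueField_eq_zero
  suffices hinj : Function.Injective (φ.map (algebraMap R p.ResidueField)).mulVecLin by
    rw [Matrix.rank, LinearMap.finrank_range_of_inj hinj, finrank_fintype_fun_eq_card]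
  refine (injective_iff_map_eq_zero _).mpr fun v hv ↦ ?_
  obtain ⟨⟨b, hb⟩, hbv⟩ := IsLocalization.exist_integer_multiples_of_finite (R ⧸ p)⁰ v
  choose w hw using hbv
  choose u hu using fun j ↦ Ideal.Quotient.mk_surjective (w j)
  have hu' : algebraMap R p.ResidueField ∘ u = b • v := by
    ext j
    exact (congrArg (algebraMap (R ⧸ p) p.ResidueField) (hu j)).trans (hw j)
  have hφu (i : m) : (φ.mulVec u) i ∈ p := by
    rw [← hker, RingHom.map_mulVec, hu', Matrix.mulVec_smul]
    exact (congrArg (b • ·) (congrFun hv i)).trans (smul_zero b)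
  have hzu : z • u = 0 := by
    refine (injective_iff_map_eq_zero _).mp hφ _ (funext fun i ↦ ?_)
    rw [map_smul]
    exact (hz _).mp (hφu i)
  have hbv : b • v = 0 := by
    rw [← hu']
    exact funext fun j ↦ (hker _).mpr ((hz _).mpr (congrFun hzu j))
  exact (smul_eq_zero.mp hbv).resolve_left (nonZeroDivisors.ne_zero hb)

variable [Fintype m]

lemma card_le_rank_map_residueField_add_card {π : (m → R) →ₗ[R] E}
    (hπ : Function.Surjective π) (hker : LinearMap.ker π ≤ LinearMap.range φ.mulVecLin)
    {p : Ideal R} [p.IsPrime] {s : Finset (LocalizedModule p.primeCompl E)}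
    (hs : Submodule.span (Localization.AtPrime p) (s : Set (LocalizedModule p.primeCompl E)) = ⊤) :
    Fintype.card m ≤ (φ.map (algebraMap R p.ResidueField)).rank + s.card := by
  classical
  set κ := p.ResidueField
  set φκ := φ.map (algebraMap R κ)
  let q : (m → R) →ₗ[R] (m → κ) ⧸ LinearMap.range φκ.mulVecLin :=
    (LinearMap.range φκ.mulVecLin).mkQ.restrictScalars R ∘ₗ (Algebra.linearMap R κ).compLeft m
  have hq : LinearMap.ker π ≤ LinearMap.ker q := by
    refine hker.trans ?_
    rintro _ ⟨v, rfl⟩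
    exact (Submodule.Quotient.mk_eq_zero _).mpr ⟨algebraMap R κ ∘ v,
      funext fun i ↦ (RingHom.map_mulVec (algebraMap R κ) φ v i).symm⟩
  let f : E →ₗ[R] (m → κ) ⧸ LinearMap.range φκ.mulVecLin :=
    (LinearMap.ker π).liftQ q hq ∘ₗ (π.quotKerEquivOfSurjective hπ).symm.toLinearMap
  have hf (v : m → R) : f (π v) = q v :=
    congrArg ((LinearMap.ker π).liftQ q hq)
      ((π.quotKerEquivOfSurjective hπ).symm_apply_apply ((LinearMap.ker π).mkQ v))
  have hspan : Submodule.span κ (Set.range f) = ⊤ := by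
    have hmkQ := (LinearMap.range φκ.mulVecLin).range_mkQ
    rw [← Submodule.map_top (Submodule.mkQ _), ← (Pi.basisFun κ m).span_eq,
      Submodule.map_span] at hmkQ
    refine top_le_iff.mp (hmkQ.symm.trans_le (Submodule.span_mono ?_))
    rintro _ ⟨_, ⟨i, rfl⟩, rfl⟩
    refine ⟨π (Pi.single i 1), (hf _).trans (congrArg (Submodule.mkQ _) ?_)⟩
    ext j
    simp [Pi.basisFun_apply, Pi.single_apply, apply_ite (algebraMap R κ)]
  calc Fintype.card m = finrank κ ((m → κ) ⧸ LinearMap.range φκ.mulVecLin) + φκ.rank := by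
        rw [Matrix.rank, Submodule.finrank_quotient_add_finrank, finrank_fintype_fun_eq_card]
    _ ≤ φκ.rank + s.card := by
        rw [add_comm]
        gcongr
        exact finrank_le_card_of_span_localizedModule_eq_top hs hspan

/-- The condition `G_s` of Artin and Nagata on the local numbers of generators of a module `E` of
rank `e`. The dimension of `R_p` is recorded as a natural number `c`. -/
def SatisfiesG (R E : Type*) [CommRing R] [AddCommGroup E] [Module R E] (e s : ℕ) : Prop :=
  ∀ (p : Ideal R) (_ : p.IsPrime) (c : ℕ),
    ringKrullDim (Localization.AtPrime p) = (c : WithBot ℕ∞) → 1 ≤ c → c ≤ s - 1 →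
    ∃ t : Finset (LocalizedModule p.primeCompl E), t.card ≤ c + e - 1 ∧
      Submodule.span (Localization.AtPrime p) (t : Set (LocalizedModule p.primeCompl E)) = ⊤

lemma card_le_height_of_satisfiesG [IsNoetherianRing R] {e : ℕ}
    (hcard : Fintype.card m = Fintype.card n + e) (hφ : Function.Injective φ.mulVecLin)
    {π : (m → R) →ₗ[R] E} (hπ : Function.Surjective π)
    (hker : LinearMap.ker π ≤ LinearMap.range φ.mulVecLin)
    (hG : SatisfiesG R E e (Fintype.card n)) {Q : Ideal (MvPolynomial m R)} [Q.IsPrime]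
    (hQ : ∀ i, φ.transpose.toMvPolynomial i ∈ Q) : Fintype.card n ≤ Q.height := by
  set q := Q.comap C
  have hle : q.height + (φ.map (algebraMap R q.ResidueField)).rank ≤ Q.height := by
    rw [← Matrix.rank_transpose, ← Matrix.transpose_map]
    exact height_comap_C_add_rank_le_height Q hQ
  obtain hc | hc := le_or_gt (Fintype.card n : ℕ∞) q.height
  · exact hc.trans (le_self_add.trans hle)
  lift q.height to ℕ using hc.ne_top with c hqc
  norm_cast at hc hle
  refine le_trans (Nat.cast_le.mpr ?_) hle
  obtain rfl | hc0 := Nat.eq_zero_or_pos c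
  · have hq : q ∈ associatedPrimes R R := by
      refine Module.associatedPrimes.minimalPrimes_annihilator_subset_associatedPrimes R R ?_
      rw [Module.annihilator_eq_bot.mpr inferInstance]
      exact Ideal.height_eq_zero_iff.mp hqc.symm
    rw [rank_map_residueField_eq_card hq hφ, zero_add]
  · have hdim : ringKrullDim (Localization.AtPrime q) = (c : WithBot ℕ∞) := by
      rw [IsLocalization.AtPrime.ringKrullDim_eq_height q, ← hqc]; rfl
    obtain ⟨t, ht, hspan⟩ := hG q inferInstance c hdim hc0 (by omega)
    have := card_le_rank_map_residueField_add_card hπ hker hspan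
    omega

lemma height_add_card_le_height_of_satisfiesG {S : Type*} [CommRing S] [IsNoetherianRing S]
    {J : Ideal S} [Module (S ⧸ J) E] {e : ℕ} (hcard : Fintype.card m = Fintype.card n + e)
    {ψ : Matrix m n S} (hψ : Function.Injective (ψ.map (Ideal.Quotient.mk J)).mulVecLin)
    {π : (m → S ⧸ J) →ₗ[S ⧸ J] E} (hπ : Function.Surjective π)
    (hker : LinearMap.ker π ≤ LinearMap.range (ψ.map (Ideal.Quotient.mk J)).mulVecLin)
    (hG : SatisfiesG (S ⧸ J) E e (Fintype.card n)) {P : Ideal (MvPolynomial m S)} [P.IsPrime]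
    (hJP : J.map C ≤ P) (hψP : ∀ i, ψ.transpose.toMvPolynomial i ∈ P) :
    J.height + Fintype.card n ≤ P.height := by
  have := isPrime_map_map_mk hJP
  refine le_trans ?_ (height_add_height_map_map_mk_le_height hJP)
  gcongr
  refine card_le_height_of_satisfiesG hcard hψ hπ hker hG fun i ↦ ?_
  rw [← Matrix.transpose_map, Matrix.toMvPolynomial_map]
  exact Ideal.mem_map_of_mem _ (hψP i)

end Presentation

section SymmetricAlgebra

variable {σ m n K : Type*} [Field K]

/-- The defining equations `[ℓ_1 … ℓ_n] = [y_1 … y_m] · ψ` of the symmetric algebra of the cokernel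
of `ψ`. -/
def symmetricRelation {R : Type*} [Fintype m] [CommSemiring R]
    (ψ : Matrix m n (MvPolynomial σ R)) (i : n) : MvPolynomial (σ ⊕ m) R :=
  ∑ j, rename Sum.inl (ψ j i) * X (Sum.inr j)

/-- The identification `K[σ, m] ≃ K[σ][m]`. -/
def sumSwapAlgEquiv (R σ m : Type*) [CommSemiring R] :
    MvPolynomial (σ ⊕ m) R ≃ₐ[R] MvPolynomial m (MvPolynomial σ R) :=
  (sumAlgEquiv R σ m).trans (commAlgEquiv R σ m)

lemma sumSwapAlgEquiv_rename_inl {R : Type*} [CommSemiring R] (f : MvPolynomial σ R) :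
    sumSwapAlgEquiv R σ m (rename Sum.inl f) = C f := by
  have : (sumSwapAlgEquiv R σ m).toAlgHom.comp (rename Sum.inl) =
      IsScalarTower.toAlgHom R (MvPolynomial σ R) (MvPolynomial m (MvPolynomial σ R)) := by
    ext
    simp [sumSwapAlgEquiv]
  exact DFunLike.congr_fun this f

lemma sumSwapAlgEquiv_X_inr {R : Type*} [CommSemiring R] (j : m) :
    sumSwapAlgEquiv R σ m (X (Sum.inr j)) = X j := by
  simp [sumSwapAlgEquiv]

variable [Fintype m]

lemma sumSwapAlgEquiv_symmetricRelation {R : Type*} [CommSemiring R]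
    (ψ : Matrix m n (MvPolynomial σ R)) (i : n) :
    sumSwapAlgEquiv R σ m (symmetricRelation ψ i) = ψ.transpose.toMvPolynomial i := by
  simp only [symmetricRelation, map_sum, map_mul, sumSwapAlgEquiv_rename_inl,
    sumSwapAlgEquiv_X_inr, Matrix.toMvPolynomial, ← C_mul_X_eq_monomial, Matrix.transpose_apply]

lemma isWeightedHomogeneous_symmetricRelation {R A : Type*} [CommSemiring R]
    [AddCommMonoid A] {w : σ ⊕ m → A} {a b : A}
    (ha : w ∘ Sum.inl = fun _ ↦ a) (hb : w ∘ Sum.inr = fun _ ↦ b)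
    {ψ : Matrix m n (MvPolynomial σ R)} {j : ℕ} (hψ : ∀ i i', (ψ i i').IsHomogeneous j) (i : n) :
    (symmetricRelation ψ i).IsWeightedHomogeneous w (j • a + b) := by
  refine (weightedHomogeneousSubmodule R w _).sum_mem fun i' _ ↦ ?_
  refine (isWeightedHomogeneous_rename ?_).mul (congrFun hb i' ▸ isWeightedHomogeneous_X R w _)
  exact ha ▸ isWeightedHomogeneous_const (hψ i' i) a

lemma isHomogeneous_symmetricRelation {R : Type*} [CommSemiring R]
    {ψ : Matrix m n (MvPolynomial σ R)} {a : ℕ}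
    (hψ : ∀ j i, (ψ j i).IsHomogeneous a) (i : n) :
    (symmetricRelation ψ i).IsHomogeneous (a + 1) := by
  have h := isWeightedHomogeneous_symmetricRelation (w := 1) (a := 1) (b := 1) rfl rfl hψ i
  rwa [smul_eq_mul, mul_one] at h

theorem isRegular_symmetricRelation_append [Finite σ] {d e : ℕ}
    (hcard : Fintype.card m = d + e) {fs : List (MvPolynomial σ K)}
    (hfs : ∀ f ∈ fs, ∃ a, 0 < a ∧ f.IsHomogeneous a) (hreg : IsWeaklyRegular (MvPolynomial σ K) fs)
    {J : Ideal (MvPolynomial σ K)} (hJ : J = Ideal.ofList fs)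
    {ψ : Matrix m (Fin d) (MvPolynomial σ K)} {a : ℕ} (hψ : ∀ j i, (ψ j i).IsHomogeneous a)
    (hinj : Function.Injective (ψ.map (Ideal.Quotient.mk J)).mulVecLin)
    {E : Type*} [AddCommGroup E] [Module (MvPolynomial σ K ⧸ J) E]
    {π : (m → MvPolynomial σ K ⧸ J) →ₗ[MvPolynomial σ K ⧸ J] E} (hπ : Function.Surjective π)
    (hker : LinearMap.ker π ≤ LinearMap.range (ψ.map (Ideal.Quotient.mk J)).mulVecLin)
    (hG : SatisfiesG (MvPolynomial σ K ⧸ J) E e d) :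
    IsRegular (MvPolynomial (σ ⊕ m) K)
      (List.ofFn (symmetricRelation ψ) ++ fs.map (rename Sum.inl)) := by
  refine isRegular_of_isHomogeneous_of_length_le_height ?_ ?_
  · simp only [List.mem_append, List.mem_ofFn, List.mem_map]
    rintro _ (⟨i, rfl⟩ | ⟨f, hf, rfl⟩)
    · exact ⟨a + 1, a.succ_pos, isHomogeneous_symmetricRelation hψ i⟩
    · exact (hfs f hf).imp fun _ h ↦ ⟨h.1, h.2.rename_isHomogeneous⟩
  rw [← RingEquiv.height_map (sumSwapAlgEquiv K σ m).toRingEquiv,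
    Ideal.height_eq_inf_minimalPrimes]
  refine le_iInf₂ fun P hP ↦ ?_
  have := hP.isPrime
  have hmem {x} (hx : x ∈ List.ofFn (symmetricRelation ψ) ++ fs.map (rename Sum.inl)) :
      sumSwapAlgEquiv K σ m x ∈ P :=
    hP.1.2 (Ideal.mem_map_of_mem _ (Ideal.subset_span hx))
  have hJP : J.map C ≤ P := by
    rw [hJ, Ideal.map_le_iff_le_comap, Ideal.ofList, Ideal.span_le]
    intro f hf
    rw [SetLike.mem_coe, Ideal.mem_comap, ← sumSwapAlgEquiv_rename_inl]
    exact hmem (List.mem_append_right _ (List.mem_map_of_mem hf))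
  have hψP (i : Fin d) : ψ.transpose.toMvPolynomial i ∈ P := by
    rw [← sumSwapAlgEquiv_symmetricRelation]
    exact hmem (List.mem_append_left _ (List.mem_ofFn.mpr ⟨i, rfl⟩))
  calc ((List.ofFn (symmetricRelation ψ) ++ fs.map (rename Sum.inl)).length : ℕ∞)
      = fs.length + Fintype.card (Fin d) := by simp [add_comm]
    _ ≤ J.height + Fintype.card (Fin d) := by
        gcongr
        exact hJ ▸ length_le_height_of_isWeaklyRegular hreg
    _ ≤ P.height := height_add_card_le_height_of_satisfiesG (by simpa using hcard) hinj hπ hker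
        (by simpa using hG) hJP hψP

end SymmetricAlgebra

section Bidegrees

variable {k : Type} [Field k] {d n : ℕ}

lemma bidegree_symmetricRelation {ι : Type*} {ψ : Matrix (Fin n) ι (MvPolynomial (Fin d) k)} {j : ℕ}
    (hψ : ∀ i i', (ψ i i').IsHomogeneous j) {i : ι} (h0 : symmetricRelation ψ i ≠ 0) {a b : ℕ}
    (h : (symmetricRelation ψ i).IsWeightedHomogeneous (bwt d n) (a, b)) : a = j ∧ b = 1 := by
  simpa using h.inj_right h0 (isWeightedHomogeneous_symmetricRelation rfl rfl hψ i)

lemma bidegree_rename_inl {f : MvPolynomial (Fin d) k} {j : ℕ} (hf : f.IsHomogeneous j)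
    (h0 : (rename Sum.inl f : B k d n) ≠ 0) {a b : ℕ}
    (h : (rename Sum.inl f : B k d n).IsWeightedHomogeneous (bwt d n) (a, b)) : a = j ∧ b = 0 := by
  simpa using h.inj_right h0 (isWeightedHomogeneous_rename (isWeightedHomogeneous_const hf (1, 0)))

end Bidegrees

section Strands

variable {R A : Type*} [CommRing R] [CommRing A] [Algebra R A] (𝒜 : ℕ → Submodule R A)

/-- The strand of degree `j` of the quotient `A ⧸ I` of a graded algebra. -/
def strand (I : Ideal A) (j : ℕ) : Submodule R (A ⧸ I) :=
  (𝒜 j).map (Ideal.Quotient.mkₐ R I).toLinearMap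

instance [∀ j, Module.Finite R (𝒜 j)] (I : Ideal A) (j : ℕ) : Module.Finite R (strand 𝒜 I j) :=
  Module.Finite.map _ _

variable {𝒜}

lemma finrank_strand_bot (j : ℕ) : finrank R (strand 𝒜 ⊥ j) = finrank R (𝒜 j) :=
  (((AlgEquiv.quotientBot R A).symm.toLinearEquiv).finrank_map_eq (𝒜 j))

variable {I : Ideal A} {x : A}

/-- The restriction to strands of the projection `A ⧸ I → A ⧸ (I + (x))`. -/
def strandFactor (𝒜 : ℕ → Submodule R A) (I : Ideal A) (x : A) (j : ℕ) :
    strand 𝒜 I j →ₗ[R] A ⧸ (I ⊔ Ideal.span {x}) :=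
  (Ideal.Quotient.factorₐ R le_sup_left).toLinearMap ∘ₗ (strand 𝒜 I j).subtype

lemma range_strandFactor (j : ℕ) :
    LinearMap.range (strandFactor 𝒜 I x j) = strand 𝒜 (I ⊔ Ideal.span {x}) j := by
  rw [strandFactor, LinearMap.range_comp, Submodule.range_subtype, strand, ← Submodule.map_comp]
  rfl

variable [GradedAlgebra 𝒜] {a : ℕ}

lemma exists_mem_sub_mul_mem (hI : I.IsHomogeneous 𝒜) (hx : x ∈ 𝒜 a) {j : ℕ} {y : A}
    (hy : y ∈ 𝒜 (a + j)) (hyI : y ∈ I ⊔ Ideal.span {x}) : ∃ b ∈ 𝒜 j, y - x * b ∈ I := by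
  obtain ⟨i, hi, _, hc, rfl⟩ := Submodule.mem_sup.mp hyI
  obtain ⟨c, rfl⟩ := Ideal.mem_span_singleton'.mp hc
  refine ⟨DirectSum.decompose 𝒜 c j, SetLike.coe_mem _, ?_⟩
  have hdec := DirectSum.decompose_of_mem_same 𝒜 hy
  rw [mul_comm c x, DirectSum.decompose_add, DirectSum.add_apply, Submodule.coe_add,
    DirectSum.coe_decompose_mul_add_of_left_mem 𝒜 hx] at hdec
  rw [mul_comm c x, ← hdec, add_sub_cancel_right]
  exact hI (a + j) hi

lemma mem_of_mem_sup_span_singleton (hI : I.IsHomogeneous 𝒜) (hx : x ∈ 𝒜 a) {j : ℕ} (hj : j < a)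
    {y : A} (hy : y ∈ 𝒜 j) (hyI : y ∈ I ⊔ Ideal.span {x}) : y ∈ I := by
  obtain ⟨i, hi, _, hc, rfl⟩ := Submodule.mem_sup.mp hyI
  obtain ⟨c, rfl⟩ := Ideal.mem_span_singleton'.mp hc
  have hdec := DirectSum.decompose_of_mem_same 𝒜 hy
  rw [mul_comm c x, DirectSum.decompose_add, DirectSum.add_apply, Submodule.coe_add,
    DirectSum.coe_decompose_mul_of_left_mem_of_not_le 𝒜 hx hj.not_ge, add_zero] at hdec
  rw [mul_comm c x, ← hdec]
  exact hI j hi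

lemma finrank_strand_sup_span_singleton_of_lt (hI : I.IsHomogeneous 𝒜) (hx : x ∈ 𝒜 a) {j : ℕ}
    (hj : j < a) : finrank R (strand 𝒜 (I ⊔ Ideal.span {x}) j) = finrank R (strand 𝒜 I j) := by
  rw [← range_strandFactor]
  refine LinearMap.finrank_range_of_inj ((injective_iff_map_eq_zero _).mpr ?_)
  rintro ⟨_, y, hy, rfl⟩ h
  exact Subtype.ext (Ideal.Quotient.eq_zero_iff_mem.mpr
    (mem_of_mem_sup_span_singleton hI hx hj hy (Ideal.Quotient.eq_zero_iff_mem.mp h)))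

/-- Multiplication by an element of degree `a` on the strands of `A ⧸ I`. -/
def strandMul (I : Ideal A) (hx : x ∈ 𝒜 a) (j : ℕ) : strand 𝒜 I j →ₗ[R] strand 𝒜 I (a + j) :=
  (LinearMap.mulLeft R (Ideal.Quotient.mk I x)).restrict (by
    rintro _ ⟨y, hy, rfl⟩
    exact ⟨x * y, SetLike.mul_mem_graded hx hy, map_mul (Ideal.Quotient.mk I) _ _⟩)

lemma strandMul_injective (hx : x ∈ 𝒜 a) (hreg : ∀ b, x * b ∈ I → b ∈ I) (j : ℕ) :
    Function.Injective (strandMul I hx j) := by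
  refine (injective_iff_map_eq_zero _).mpr ?_
  rintro ⟨_, y, hy, rfl⟩ h
  have hxy : Ideal.Quotient.mk I (x * y) = 0 :=
    (map_mul (Ideal.Quotient.mk I) _ _).trans (congrArg Subtype.val h)
  exact Subtype.ext (Ideal.Quotient.eq_zero_iff_mem.mpr
    (hreg y (Ideal.Quotient.eq_zero_iff_mem.mp hxy)))

lemma range_strandMul (hI : I.IsHomogeneous 𝒜) (hx : x ∈ 𝒜 a) (j : ℕ) :
    LinearMap.range (strandMul I hx j) = LinearMap.ker (strandFactor 𝒜 I x (a + j)) := by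
  refine le_antisymm ?_ ?_
  · rintro _ ⟨⟨_, y, hy, rfl⟩, rfl⟩
    exact Ideal.Quotient.eq_zero_iff_mem.mpr
      (Ideal.mem_sup_right (Ideal.mem_span_singleton.mpr (dvd_mul_right x y)))
  · rintro ⟨_, y, hy, rfl⟩ h
    obtain ⟨b, hb, hyb⟩ := exists_mem_sub_mul_mem hI hx hy (Ideal.Quotient.eq_zero_iff_mem.mp h)
    refine ⟨⟨_, b, hb, rfl⟩, Subtype.ext ?_⟩
    exact (map_mul (Ideal.Quotient.mk I) _ _).symm.trans (Ideal.Quotient.eq.mpr hyb).symm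

lemma finrank_ker_strandFactor (hI : I.IsHomogeneous 𝒜) (hx : x ∈ 𝒜 a)
    (hreg : ∀ b, x * b ∈ I → b ∈ I) (j : ℕ) :
    finrank R (LinearMap.ker (strandFactor 𝒜 I x (a + j))) = finrank R (strand 𝒜 I j) := by
  rw [← range_strandMul hI hx, LinearMap.finrank_range_of_inj (strandMul_injective hx hreg j)]

lemma finrank_strand_sup_span_singleton_add [IsDomain R] [∀ j, Module.Finite R (𝒜 j)]
    (hI : I.IsHomogeneous 𝒜) (hx : x ∈ 𝒜 a) (hreg : ∀ b, x * b ∈ I → b ∈ I) (j : ℕ) :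
    finrank R (strand 𝒜 (I ⊔ Ideal.span {x}) (a + j)) + finrank R (strand 𝒜 I j) =
      finrank R (strand 𝒜 I (a + j)) := by
  rw [← range_strandFactor, ← finrank_ker_strandFactor hI hx hreg,
    ← (strandFactor 𝒜 I x (a + j)).quotKerEquivRange.finrank_eq]
  exact Submodule.finrank_quotient_add_finrank _

lemma isHomogeneous_ofList {xs : List A} (hxs : ∀ x ∈ xs, SetLike.IsHomogeneousElem 𝒜 x) :
    (Ideal.ofList xs).IsHomogeneous 𝒜 :=
  Ideal.homogeneous_span 𝒜 _ hxs

end Strands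

section StrandsOfPolynomialRing

attribute [local instance] MvPolynomial.gradedAlgebra

variable {σ R : Type*} [CommRing R]

instance [Finite σ] (j : ℕ) : Module.Finite R (homogeneousSubmodule σ R j) :=
  Module.Finite.iff_fg.mpr (homogeneousSubmodule_fg σ R j)

lemma finrank_homogeneousSubmodule [Fintype σ] [Nontrivial R] (j : ℕ) :
    finrank R (homogeneousSubmodule σ R j) = (Fintype.card σ).multichoose j := by
  classical
  have : {d : σ →₀ ℕ | d.degree = j} = (Finset.univ.finsuppAntidiag j : Finset (σ →₀ ℕ)) := by
    ext d
    simp [Finsupp.degree_eq_sum]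
  rw [homogeneousSubmodule_eq_finsupp_supported, this,
    (AddMonoidAlgebra.supportedEquivFinsupp _).finrank_eq, finrank_finsupp_self]
  exact (Fintype.card_coe _).trans (Finset.card_finsuppAntidiag_nat_eq_multichoose j)

lemma finrank_strand_ofList_linear [IsDomain R] [Fintype σ] {c : ℕ} {xs : List (MvPolynomial σ R)}
    (hcard : Fintype.card σ = c + xs.length) (hxs : ∀ x ∈ xs, x.IsHomogeneous 1)
    (hreg : IsWeaklyRegular (MvPolynomial σ R) xs) (j : ℕ) :
    finrank R (strand (homogeneousSubmodule σ R) (Ideal.ofList xs) j) = c.multichoose j := by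
  induction xs using List.reverseRecOn generalizing c j with
  | nil =>
    rw [Ideal.ofList_nil, finrank_strand_bot, finrank_homogeneousSubmodule, hcard]; rfl
  | append_singleton xs x ih =>
    obtain ⟨hreg', hx⟩ := isWeaklyRegular_append_singleton_iff.mp hreg
    have hxs' : ∀ y ∈ xs, y.IsHomogeneous 1 := fun y hy ↦ hxs y (List.mem_append_left _ hy)
    have hx1 : x ∈ homogeneousSubmodule σ R 1 := hxs x (by simp)
    have hI : (Ideal.ofList xs).IsHomogeneous (homogeneousSubmodule σ R) :=
      isHomogeneous_ofList fun y hy ↦ ⟨1, hxs' y hy⟩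
    replace ih := ih (c := c + 1) (by simpa [add_assoc, add_comm 1] using hcard) hxs' hreg'
    rw [Ideal.ofList_append, Ideal.ofList_singleton]
    cases j with
    | zero => rw [finrank_strand_sup_span_singleton_of_lt hI hx1 one_pos, ih,
        Nat.multichoose_zero_right, Nat.multichoose_zero_right]
    | succ j =>
      have := finrank_strand_sup_span_singleton_add hI hx1 hx j
      rw [ih, add_comm 1 j, ih, Nat.multichoose_succ_succ] at this
      exact Nat.add_right_cancel this

lemma finrank_strand_ofList_append_quadrics [IsDomain R] [Fintype σ] {xs : List (MvPolynomial σ R)}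
    (hcard : Fintype.card σ = 2 + xs.length) (hxs : ∀ x ∈ xs, x.IsHomogeneous 1)
    {f g : MvPolynomial σ R} (hf : f.IsHomogeneous 2) (hg : g.IsHomogeneous 2)
    (hreg : IsWeaklyRegular (MvPolynomial σ R) (xs ++ [f, g])) :
    finrank R (strand (homogeneousSubmodule σ R) (Ideal.ofList (xs ++ [f, g])) 1) = 2 ∧
      finrank R (strand (homogeneousSubmodule σ R) (Ideal.ofList (xs ++ [f, g])) 2) = 1 := by
  rw [List.append_cons] at hreg ⊢
  obtain ⟨hregf, hg'⟩ := isWeaklyRegular_append_singleton_iff.mp hreg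
  obtain ⟨hregx, hf'⟩ := isWeaklyRegular_append_singleton_iff.mp hregf
  have hI : (Ideal.ofList xs).IsHomogeneous (homogeneousSubmodule σ R) :=
    isHomogeneous_ofList fun y hy ↦ ⟨1, hxs y hy⟩
  have hI' : (Ideal.ofList (xs ++ [f])).IsHomogeneous (homogeneousSubmodule σ R) := by
    rw [Ideal.ofList_append, Ideal.ofList_singleton]
    exact hI.sup (Ideal.homogeneous_span _ _ (by simpa using ⟨2, hf⟩))
  have hlin := finrank_strand_ofList_linear hcard hxs hregx
  have hf_zero := finrank_strand_sup_span_singleton_of_lt hI hf two_pos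
  have hf_one := finrank_strand_sup_span_singleton_of_lt hI hf one_lt_two
  have hf_two := finrank_strand_sup_span_singleton_add hI hf hf' 0
  have hg_one := finrank_strand_sup_span_singleton_of_lt hI' hg one_lt_two
  have hg_two := finrank_strand_sup_span_singleton_add hI' hg hg' 0
  rw [← Ideal.ofList_singleton, ← Ideal.ofList_append] at hf_zero hf_one hf_two hg_one hg_two
  rw [hlin, Nat.multichoose_two] at hf_zero hf_one
  rw [hlin, hlin, Nat.multichoose_two, Nat.multichoose_two] at hf_two
  rw [hf_zero, add_zero] at hg_two
  refine ⟨hg_one.trans hf_one, ?_⟩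
  rw [add_zero] at hf_two
  omega

end StrandsOfPolynomialRing

section StrandZero

variable {σ R : Type*} [CommRing R]

lemma strand_zero_eq_range (I : Ideal (MvPolynomial σ R)) :
    strand (homogeneousSubmodule σ R) I 0 =
      LinearMap.range (Algebra.linearMap R (MvPolynomial σ R ⧸ I)) := by
  rw [strand, homogeneousSubmodule_zero, Submodule.one_eq_range, ← LinearMap.range_comp]
  rfl

/-- The degree zero strand of a quotient of a polynomial ring by an ideal of polynomials without
constant term. -/
def strandZeroEquiv {I : Ideal (MvPolynomial σ R)}
    (hI : ∀ p ∈ I, constantCoeff p = 0) : R ≃ₗ[R] strand (homogeneousSubmodule σ R) I 0 :=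
  (LinearEquiv.ofInjective (Algebra.linearMap R (MvPolynomial σ R ⧸ I)) (by
    refine (injective_iff_map_eq_zero _).mpr fun r hr ↦ ?_
    simpa using hI _ (Ideal.Quotient.eq_zero_iff_mem.mp hr))).trans
  (LinearEquiv.ofEq _ _ (strand_zero_eq_range I).symm)

end StrandZero

section SxDeg

variable {k : Type} [Field k] {d n : ℕ}

variable (k d n) in
/-- The identification `B ≃ T[x_1, …, x_d]` of `T`-algebras. -/
def polynomialEquiv : B k d n ≃ₐ[T k n] MvPolynomial (Fin d) (T k n) :=
  AlgEquiv.ofRingEquiv (f := (sumAlgEquiv k (Fin d) (Fin n)).toRingEquiv)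
    (DFunLike.congr_fun (sumAlgEquiv_comp_rename_inr k (Fin d) (Fin n)))

lemma isHomogeneous_polynomialEquiv_iff {F : B k d n} {j : ℕ} :
    (polynomialEquiv k d n F).IsHomogeneous j ↔ F.IsWeightedHomogeneous (wx d n) j :=
  isHomogeneous_sumAlgEquiv_iff

lemma map_polynomialEquiv_ofList (xs : List (B k d n)) :
    (Ideal.ofList xs).map (polynomialEquiv k d n) = Ideal.ofList (xs.map (polynomialEquiv k d n)) :=
  Ideal.map_ofList (polynomialEquiv k d n : B k d n →+* MvPolynomial (Fin d) (T k n)) xs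

lemma map_SxDeg (I : Ideal (B k d n)) (j : ℕ) :
    (SxDeg k d n I j).map (Ideal.quotientEquivAlg I (I.map (polynomialEquiv k d n))
      (polynomialEquiv k d n) rfl).toLinearMap =
        strand (homogeneousSubmodule (Fin d) (T k n)) (I.map (polynomialEquiv k d n)) j := by
  rw [SxDeg, Submodule.map_span]
  refine le_antisymm (Submodule.span_le.mpr ?_) ?_
  · rintro _ ⟨_, ⟨F, hF, rfl⟩, rfl⟩
    exact ⟨polynomialEquiv k d n F, isHomogeneous_polynomialEquiv_iff.mpr hF, rfl⟩
  · rintro _ ⟨G, hG, rfl⟩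
    obtain ⟨F, rfl⟩ := (polynomialEquiv k d n).surjective G
    exact Submodule.subset_span ⟨_, ⟨F, isHomogeneous_polynomialEquiv_iff.mp hG, rfl⟩, rfl⟩

/-- The identification of the strand of `x`-degree `j` of `B ⧸ I` with a strand of a quotient of the
polynomial ring `T[x_1, …, x_d]`. -/
def sxDegEquiv (I : Ideal (B k d n)) (j : ℕ) : SxDeg k d n I j ≃ₗ[T k n]
    strand (homogeneousSubmodule (Fin d) (T k n)) (I.map (polynomialEquiv k d n)) j :=
  ((Ideal.quotientEquivAlg I _ (polynomialEquiv k d n) rfl).toLinearEquiv.submoduleMap _).trans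
    (LinearEquiv.ofEq _ _ (map_SxDeg I j))

lemma rank_SxDeg_ofList_append_quadrics {xs : List (B k d n)} (hcard : d = 2 + xs.length)
    (hxs : ∀ x ∈ xs, x.IsWeightedHomogeneous (wx d n) 1) {f g : B k d n}
    (hf : f.IsWeightedHomogeneous (wx d n) 2) (hg : g.IsWeightedHomogeneous (wx d n) 2)
    (hreg : IsWeaklyRegular (B k d n) (xs ++ [f, g])) :
    Module.rank (T k n) (SxDeg k d n (Ideal.ofList (xs ++ [f, g])) 1) = 2 ∧
      Module.rank (T k n) (SxDeg k d n (Ideal.ofList (xs ++ [f, g])) 2) = 1 := by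
  have hreg' := isWeaklyRegular_map_ringEquiv (polynomialEquiv k d n).toRingEquiv hreg
  rw [List.map_append] at hreg'
  obtain ⟨hone, htwo⟩ := finrank_strand_ofList_append_quadrics
    (by simpa using hcard)
    (List.forall_mem_map.mpr fun x hx ↦ isHomogeneous_polynomialEquiv_iff.mpr (hxs x hx))
    (isHomogeneous_polynomialEquiv_iff.mpr hf) (isHomogeneous_polynomialEquiv_iff.mpr hg) hreg'
  rw [(sxDegEquiv _ 1).rank_eq, (sxDegEquiv _ 2).rank_eq, ← finrank_eq_rank, ← finrank_eq_rank,
    map_polynomialEquiv_ofList, List.map_append]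
  exact ⟨congrArg Nat.cast hone, congrArg Nat.cast htwo⟩

lemma nonempty_SxDeg_zero_equiv {xs : List (B k d n)}
    (hxs : ∀ x ∈ xs, ∃ j, 0 < j ∧ x.IsWeightedHomogeneous (wx d n) j) :
    Nonempty (SxDeg k d n (Ideal.ofList xs) 0 ≃ₗ[T k n] T k n) := by
  refine ⟨(sxDegEquiv _ 0).trans (strandZeroEquiv fun p hp ↦ ?_).symm⟩
  suffices h : (Ideal.ofList xs).map (polynomialEquiv k d n) ≤
      RingHom.ker (constantCoeff (R := T k n)) from h hp
  refine Ideal.map_le_iff_le_comap.mpr (Ideal.span_le.mpr fun x hx ↦ ?_)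
  obtain ⟨j, hj, hxj⟩ := hxs x hx
  refine (isHomogeneous_polynomialEquiv_iff.mpr hxj).coeff_eq_zero ?_
  simpa using hj.ne

end SxDeg

section StrandRanks

variable {k : Type} [Field k]

theorem ci_strand_ranks_general {d e : ℕ} {f g : MvPolynomial (Fin (d + 2)) k}
    (hf : f.IsHomogeneous 2) (hg : g.IsHomogeneous 2)
    (hfg : IsWeaklyRegular (MvPolynomial (Fin (d + 2)) k) [f, g])
    {E : Type*} [AddCommGroup E]
    [Module (MvPolynomial (Fin (d + 2)) k ⧸ Ideal.span {f, g}) E]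
    {ψ : Matrix (Fin (d + e)) (Fin d) (MvPolynomial (Fin (d + 2)) k)}
    (hψ : ∀ i j, (ψ i j).IsHomogeneous 1)
    (hinj : Function.Injective (ψ.map (Ideal.Quotient.mk (Ideal.span {f, g}))).mulVecLin)
    {π : (Fin (d + e) → MvPolynomial (Fin (d + 2)) k ⧸ Ideal.span {f, g})
      →ₗ[MvPolynomial (Fin (d + 2)) k ⧸ Ideal.span {f, g}] E}
    (hπ : Function.Surjective π)
    (hker : LinearMap.ker π ≤
      LinearMap.range (ψ.map (Ideal.Quotient.mk (Ideal.span {f, g}))).mulVecLin)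
    (hG : SatisfiesG (MvPolynomial (Fin (d + 2)) k ⧸ Ideal.span {f, g}) E e d)
    {L : Ideal (B k (d + 2) (d + e))}
    (hL : L = Ideal.ofList (List.ofFn (symmetricRelation ψ) ++
      [rename Sum.inl f, rename Sum.inl g])) :
    IsRegular (B k (d + 2) (d + e))
      (List.ofFn (symmetricRelation ψ) ++ [rename Sum.inl f, rename Sum.inl g]) ∧
    (∀ (α β : Fin d → ℕ) (αf βf αg βg : ℕ),
      (∀ i, (symmetricRelation ψ i).IsWeightedHomogeneous (bwt (d + 2) (d + e)) (α i, β i)) →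
      (rename Sum.inl f).IsWeightedHomogeneous (bwt (d + 2) (d + e)) (αf, βf) →
      (rename Sum.inl g).IsWeightedHomogeneous (bwt (d + 2) (d + e)) (αg, βg) →
      (∑ i, α i) + αf + αg = (d + 2) + 2 ∧ (∑ i, β i) + βf + βg = d) ∧
    Nonempty (SxDeg k (d + 2) (d + e) L 0 ≃ₗ[T k (d + e)] T k (d + e)) ∧
    Module.rank (T k (d + e)) (SxDeg k (d + 2) (d + e) L 1) = 2 ∧
    Module.rank (T k (d + e)) (SxDeg k (d + 2) (d + e) L 2) = 1 := by
  have hreg : IsRegular (B k (d + 2) (d + e))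
      (List.ofFn (symmetricRelation ψ) ++ [rename Sum.inl f, rename Sum.inl g]) :=
    isRegular_symmetricRelation_append (fs := [f, g]) (by simp)
      (by simpa using ⟨⟨2, two_pos, hf⟩, ⟨2, two_pos, hg⟩⟩) hfg
      (by simp [Ideal.ofList_cons, Ideal.span_insert]) hψ hinj hπ hker hG
  have hℓx (i) : (symmetricRelation ψ i).IsWeightedHomogeneous (wx (d + 2) (d + e)) 1 :=
    isWeightedHomogeneous_symmetricRelation (a := 1) (b := 0) rfl rfl hψ i
  have hfx : (rename Sum.inl f).IsWeightedHomogeneous (wx (d + 2) (d + e)) 2 :=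
    isWeightedHomogeneous_rename hf
  have hgx : (rename Sum.inl g).IsWeightedHomogeneous (wx (d + 2) (d + e)) 2 :=
    isWeightedHomogeneous_rename hg
  subst hL
  refine ⟨hreg, fun α β αf βf αg βg hℓ hf' hg' ↦ ?_, nonempty_SxDeg_zero_equiv ?_,
    rank_SxDeg_ofList_append_quadrics ?_ ?_ hfx hgx hreg.toIsWeaklyRegular⟩
  · have hℓαβ (i) := bidegree_symmetricRelation hψ (ne_zero_of_mem_isRegular hreg (by simp)) (hℓ i)
    have hfαβ := bidegree_rename_inl hf (ne_zero_of_mem_isRegular hreg (by simp)) hf'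
    have hgαβ := bidegree_rename_inl hg (ne_zero_of_mem_isRegular hreg (by simp)) hg'
    simp [hℓαβ, hfαβ, hgαβ]
  · simp only [List.mem_append, List.mem_ofFn, List.mem_pair]
    rintro _ (⟨i, rfl⟩ | rfl | rfl)
    exacts [⟨1, one_pos, hℓx i⟩, ⟨2, two_pos, hfx⟩, ⟨2, two_pos, hgx⟩]
  · simp [add_comm]
  · simpa using hℓx

end StrandRanks

set_option synthInstance.maxHeartbeats 1000000
set_option maxHeartbeats 3000000

theorem ci_strand_ranks
    (d e : ℕ) (hd : 2 ≤ d)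
    -- `f, g`: a homogeneous `S`-regular sequence of quadrics in `S = k[x_1,…,x_{d+2}]`
    (f g : MvPolynomial (Fin (d + 2)) k)
    (hf : f ∈ homogeneousSubmodule (Fin (d + 2)) k 2)
    (hg : g ∈ homogeneousSubmodule (Fin (d + 2)) k 2)
    (hfg : RingTheory.Sequence.IsRegular (MvPolynomial (Fin (d + 2)) k) [f, g])
    -- `E`: a module over `R = S/(f,g)`
    (E : Type) [AddCommGroup E]
    [Module (MvPolynomial (Fin (d + 2)) k ⧸
      (Ideal.span {f, g} : Ideal (MvPolynomial (Fin (d + 2)) k))) E]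
    [Module.Finite (MvPolynomial (Fin (d + 2)) k ⧸
      (Ideal.span {f, g} : Ideal (MvPolynomial (Fin (d + 2)) k))) E]
    -- `E` is torsion-free
    (htf : Submodule.torsion (MvPolynomial (Fin (d + 2)) k ⧸
      (Ideal.span {f, g} : Ideal (MvPolynomial (Fin (d + 2)) k))) E = ⊥)
    -- `ψ`: the matrix of linear forms over `S` lifting the presentation matrix `φ`
    (ψ : Matrix (Fin (d + e)) (Fin d) (MvPolynomial (Fin (d + 2)) k))
    (hψlin : ∀ i j, ψ i j ∈ homogeneousSubmodule (Fin (d + 2)) k 1)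
    (φ : Matrix (Fin (d + e)) (Fin d) (MvPolynomial (Fin (d + 2)) k ⧸
      (Ideal.span {f, g} : Ideal (MvPolynomial (Fin (d + 2)) k))))
    (hφψ : ∀ i j, φ i j = Ideal.Quotient.mk _ (ψ i j))
    -- `0 → R^d →φ R^{d+e} →π E → 0` is a (minimal) free resolution, so `pd_R E = 1`
    -- and `rank E = e`
    (hinj : Function.Injective φ.mulVecLin)
    (π : (Fin (d + e) → (MvPolynomial (Fin (d + 2)) k ⧸
        (Ideal.span {f, g} : Ideal (MvPolynomial (Fin (d + 2)) k)))) →ₗ[MvPolynomial (Fin (d + 2)) k ⧸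
        (Ideal.span {f, g} : Ideal (MvPolynomial (Fin (d + 2)) k))] E)
    (hsurj : Function.Surjective π)
    (hker : LinearMap.ker π = LinearMap.range φ.mulVecLin)
    -- `I_1(φ) = (x_1,…,x_{d+2})R`
    (hI1 : Ideal.span {r | ∃ i j, φ i j = r} =
      Ideal.span (Set.range fun t : Fin (d + 2) => Ideal.Quotient.mk _ (X t)))
    -- `E` is minimally generated by `μ(E) = d+e` elements
    (hμ : ∀ s : Finset E,
      Submodule.span (MvPolynomial (Fin (d + 2)) k ⧸
        (Ideal.span {f, g} : Ideal (MvPolynomial (Fin (d + 2)) k))) (s : Set E) = ⊤ →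
      d + e ≤ s.card)
    -- `E` satisfies `G_d`
    (hGd : ∀ (p : Ideal (MvPolynomial (Fin (d + 2)) k ⧸
        (Ideal.span {f, g} : Ideal (MvPolynomial (Fin (d + 2)) k)))) (_ : p.IsPrime) (c : ℕ),
      ringKrullDim (Localization.AtPrime p) = (c : WithBot ℕ∞) → 1 ≤ c → c ≤ d - 1 →
      ∃ s : Finset (LocalizedModule p.primeCompl E), s.card ≤ c + e - 1 ∧
        Submodule.span (Localization.AtPrime p)
          (s : Set (LocalizedModule p.primeCompl E)) = ⊤)
    -- the defining ideal `L = (ℓ_1,…,ℓ_d,f,g)` of `S(E)` as a quotient of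
    -- `B = S ⊗_k T`, with `[ℓ_1 … ℓ_d] = [y_1 … y_{d+e}]·ψ`
    (ℓ : Fin d → B k (d + 2) (d + e))
    (hℓ : ∀ i, ℓ i = ∑ j, (rename Sum.inl (ψ j i)) * X (Sum.inr j))
    (L : Ideal (B k (d + 2) (d + e)))
    (hL : L = Ideal.span (Set.range ℓ ∪ {rename Sum.inl f, rename Sum.inl g})) :
    -- `L` is generated by the `B`-regular sequence `ℓ_1,…,ℓ_d,f,g`
    RingTheory.Sequence.IsRegular (B k (d + 2) (d + e))
      (List.ofFn ℓ ++ [rename Sum.inl f, rename Sum.inl g]) ∧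
    -- `δ = 2` and `τ = d` in the duality theorem applied to `ℓ_1,…,ℓ_d,f,g`
    (∀ (α β : Fin d → ℕ) (αf βf αg βg : ℕ),
      (∀ i, ℓ i ≠ 0 ∧ ℓ i ∈ weightedHomogeneousSubmodule k (bwt (d + 2) (d + e)) (α i, β i)) →
      (rename Sum.inl f : B k (d + 2) (d + e)) ∈
        weightedHomogeneousSubmodule k (bwt (d + 2) (d + e)) (αf, βf) →
      (rename Sum.inl g : B k (d + 2) (d + e)) ∈
        weightedHomogeneousSubmodule k (bwt (d + 2) (d + e)) (αg, βg) →
      ((∑ i, α i) + αf + αg) = (d + 2) + 2 ∧ ((∑ i, β i) + βf + βg) = d) ∧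
    -- `S(E)_0` is free of rank one over `T`
    Nonempty ((SxDeg k (d + 2) (d + e) L 0) ≃ₗ[T k (d + e)] T k (d + e)) ∧
    -- `rank_T S(E)_1 = 2`
    Module.rank (T k (d + e)) (SxDeg k (d + 2) (d + e) L 1) = 2 ∧
    -- `rank_T S(E)_2 = 1`
    Module.rank (T k (d + e)) (SxDeg k (d + 2) (d + e) L 2) = 1 := by
  obtain rfl : ℓ = symmetricRelation ψ := funext hℓ
  obtain rfl : φ = ψ.map (Ideal.Quotient.mk _) := Matrix.ext hφψ
  obtain ⟨hreg, hdeg, hranks⟩ := ci_strand_ranks_general hf hg hfg.toIsWeaklyRegular hψlin hinj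
    hsurj hker.le hGd (hL.trans (ofList_ofFn_append_pair _ _ _).symm)
  exact ⟨hreg, fun α β αf βf αg βg hℓ ↦ hdeg α β αf βf αg βg fun i ↦ (hℓ i).2, hranks⟩

end Stmt12
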